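/- arXiv:1302.0271 — 11 statements merged into one kernel-verified Lean document; each statement's English description precedes it below -/
import Mathlib

section
/- Let k ≥ 1 be an integer, α = (1+√(1+4/k))/2, β = kα+1, a_n = ⌊nα⌋, b_n = ⌊nβ⌋, and let S̄_k = {(x,y) ∈ ℕ² : ∃ n ∈ ℕ, {x,y} = {a_n,b_n}}. Define P : ℕ×ℕ → Prop by well-founded recursion on x+y: P(x,y) holds if and only if every legal Γ_k-move from (x,y) leads to a position (x',y') for which P(x',y') fails. Then for all (x,y) ∈ ℕ², P(x,y) holds if and only if (x,y) ∈ S̄_k. (That is, the set of P-positions of the game Γ_k is exactly S̄_k.) -/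
/-- α = (1 + √(1 + 4/k)) / 2 -/
noncomputable def alphaK (k : ℕ) : ℝ := (1 + Real.sqrt (1 + 4 / (k : ℝ))) / 2

/-- β = k·α + 1 -/
noncomputable def betaK (k : ℕ) : ℝ := (k : ℝ) * alphaK k + 1

/-- a_n = ⌊n·α⌋ -/
noncomputable def aSeq (k n : ℕ) : ℤ := ⌊(n : ℝ) * alphaK k⌋

/-- b_n = ⌊n·β⌋ -/
noncomputable def bSeq (k n : ℕ) : ℤ := ⌊(n : ℝ) * betaK k⌋

/-- the pair (f^i_n, g^i_n): (f^i_0,g^i_0) = (0,i+1),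
    (f^i_n, g^i_n) = (f^i_{n−1} + g^i_{n−1}, k·f^i_{n−1} + (k+1)·g^i_{n−1} + i). -/
def fg (k i : ℕ) : ℕ → ℕ × ℕ
  | 0 => (0, i + 1)
  | n + 1 => ((fg k i n).1 + (fg k i n).2,
      k * (fg k i n).1 + (k + 1) * (fg k i n).2 + i)

/-- The moves of the ruleset Γ_k, from position `p` to position `q`
    (positions are pairs of natural numbers, so nonnegativity of the
    resulting coordinates is automatic from the additive formulation). -/
def GammaMove (k : ℕ) (p q : ℕ × ℕ) : Prop :=
  -- Type I: Nim moves
  (∃ n : ℕ, 1 ≤ n ∧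
      ((q.1 + n = p.1 ∧ q.2 = p.2) ∨ (q.1 = p.1 ∧ q.2 + n = p.2))) ∨
  -- Type II: extended diagonal moves, s,t ≥ 1 with |s−t| < k
  (∃ s t : ℕ, 1 ≤ s ∧ 1 ≤ t ∧ s < t + k ∧ t < s + k ∧
      ((q.1 + s = p.1 ∧ q.2 + t = p.2) ∨ (q.1 + t = p.1 ∧ q.2 + s = p.2))) ∨
  -- Type III: extra moves (f^i_n, g^i_n − 1) for 1 ≤ i ≤ k−1, n ≥ 1
  (∃ i n : ℕ, 1 ≤ i ∧ i + 1 ≤ k ∧ 1 ≤ n ∧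
      ((q.1 + (fg k i n).1 = p.1 ∧ q.2 + ((fg k i n).2 - 1) = p.2) ∨
       (q.1 + ((fg k i n).2 - 1) = p.1 ∧ q.2 + (fg k i n).1 = p.2)))

/-- S̄_k = {(x,y) : ∃ n, {x,y} = {a_n, b_n}} -/
def SbarK (k : ℕ) : Set (ℕ × ℕ) :=
  {p | ∃ n : ℕ, ((p.1 : ℤ) = aSeq k n ∧ (p.2 : ℤ) = bSeq k n) ∨
                ((p.1 : ℤ) = bSeq k n ∧ (p.2 : ℤ) = aSeq k n)}

lemma fg_snd_pos (k i : ℕ) : ∀ n, 1 ≤ (fg k i n).2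
  | 0 => by simp [fg]
  | n + 1 => by
      have h := fg_snd_pos k i n
      simp only [fg]
      nlinarith

lemma gammaMove_lt (k : ℕ) (p q : ℕ × ℕ) (h : GammaMove k p q) :
    q.1 + q.2 < p.1 + p.2 := by
  rcases h with ⟨n, hn, hc⟩ | ⟨s, t, hs, ht, _, _, hc⟩ | ⟨i, n, hi, hik, hn, hc⟩
  · rcases hc with ⟨h1, h2⟩ | ⟨h1, h2⟩ <;> omega
  · rcases hc with ⟨h1, h2⟩ | ⟨h1, h2⟩ <;> omega
  · have hf : 1 ≤ (fg k i n).1 := by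
      cases n with
      | zero => omega
      | succ m =>
        have := fg_snd_pos k i m
        simp only [fg]
        omega
    rcases hc with ⟨h1, h2⟩ | ⟨h1, h2⟩ <;> omega

/-- P-positions of Γ_k, defined by well-founded recursion on x+y:
    P(x,y) iff every legal Γ_k-move from (x,y) leads to a non-P position. -/
def Ppos (k : ℕ) (p : ℕ × ℕ) : Prop :=
  ∀ q : ℕ × ℕ, GammaMove k p q → ¬ Ppos k q
termination_by p.1 + p.2
decreasing_by exact gammaMove_lt k p q (by assumption)


lemma al_sq (k : ℕ) (hk : 1 ≤ k) : (k:ℝ) * alphaK k ^ 2 = k * alphaK k + 1 := by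
  have hk' : (0:ℝ) < k := by exact_mod_cast hk
  have h : Real.sqrt (1 + 4 / (k : ℝ)) ^ 2 = 1 + 4 / (k:ℝ) := Real.sq_sqrt (by positivity)
  unfold alphaK
  have h2 : (k:ℝ) * (4 / k) = 4 := by field_simp
  linear_combination (k:ℝ)/4 * h + h2 / 4

lemma al_gt (k : ℕ) (hk : 1 ≤ k) : 1 < alphaK k := by
  have hk' : (0:ℝ) < k := by exact_mod_cast hk
  have : 1 < Real.sqrt (1 + 4 / (k : ℝ)) := by
    rw [Real.lt_sqrt (by norm_num)]
    have : 0 < 4 / (k:ℝ) := by positivity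
    linarith
  unfold alphaK
  linarith

lemma kal_lt (k : ℕ) (hk : 1 ≤ k) : (k:ℝ) * alphaK k < k + 1 := by
  have hk' : (0:ℝ) < k := by exact_mod_cast hk
  have h1 := al_sq k hk
  have h2 := al_gt k hk
  by_contra h
  push Not at h
  nlinarith

lemma kal_gt (k : ℕ) (hk : 1 ≤ k) : (k:ℝ) < k * alphaK k := by
  have hk' : (0:ℝ) < k := by exact_mod_cast hk
  have h2 := al_gt k hk
  nlinarith

lemma al_lt (k : ℕ) (hk : 1 ≤ k) : alphaK k < 2 := by
  have hk' : (1:ℝ) ≤ k := by exact_mod_cast hk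
  have h2 := kal_lt k hk
  by_contra h
  push Not at h
  nlinarith

lemma al_irr (k : ℕ) (hk : 1 ≤ k) : Irrational (alphaK k) := by
  have hk' : (0:ℝ) < k := by exact_mod_cast hk
  rintro ⟨q, hq⟩
  have h := al_sq k hk
  rw [← hq] at h
  have h' : (k:ℚ) * q ^ 2 = k * q + 1 := by exact_mod_cast h
  have hs : ((k^2 + 4 * k : ℕ) : ℚ) = (2 * k * q - k) ^ 2 := by
    push_cast
    linear_combination (-4 * (k:ℚ)) * h'
  have hsq : IsSquare ((k^2 + 4 * k : ℕ) : ℚ) := ⟨2 * k * q - k, by rw [hs]; ring⟩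
  rw [Rat.isSquare_natCast_iff] at hsq
  obtain ⟨r, hr⟩ := hsq
  have h1 : k + 1 < r := by nlinarith
  have h2 : r < k + 2 := by nlinarith
  omega

lemma a_le (k n : ℕ) : (aSeq k n : ℝ) ≤ n * alphaK k := Int.floor_le _
lemma a_lt (k n : ℕ) : (n:ℝ) * alphaK k < aSeq k n + 1 := Int.lt_floor_add_one _
lemma b_le (k n : ℕ) : (bSeq k n : ℝ) ≤ n * (k * alphaK k + 1) := Int.floor_le _
lemma b_lt (k n : ℕ) : (n:ℝ) * (k * alphaK k + 1) < bSeq k n + 1 := Int.lt_floor_add_one _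

lemma a_zero (k : ℕ) : aSeq k 0 = 0 := by simp [aSeq]
lemma b_zero (k : ℕ) : bSeq k 0 = 0 := by simp [bSeq]

lemma r_nonneg (k n : ℕ) (hk : 1 ≤ k) : k * aSeq k n + n ≤ bSeq k n := by
  have hk' : (0:ℝ) < k := by exact_mod_cast hk
  have h1 := a_le k n
  have h2 := b_lt k n
  have : ((k * aSeq k n + n : ℤ):ℝ) < ((bSeq k n + 1 : ℤ) : ℝ) := by
    push_cast
    nlinarith
  have := Int.cast_lt.mp this
  omega

lemma r_lt (k n : ℕ) (hk : 1 ≤ k) : bSeq k n < k * aSeq k n + n + k := by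
  have hk' : (0:ℝ) < k := by exact_mod_cast hk
  have h1 := a_lt k n
  have h2 := b_le k n
  have : ((bSeq k n : ℤ) : ℝ) < ((k * aSeq k n + n + k : ℤ):ℝ) := by
    push_cast
    nlinarith
  exact Int.cast_lt.mp this

lemma a_step (k n : ℕ) (hk : 1 ≤ k) :
    aSeq k (n+1) = aSeq k n + 1 ∨ aSeq k (n+1) = aSeq k n + 2 := by
  have h1 := a_lt k n
  have h2 := a_le k n
  have h3 := a_lt k (n+1)
  have h4 := a_le k (n+1)
  have h5 := al_gt k hk
  have h6 := al_lt k hk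
  push_cast at h3 h4
  have e1 : ((aSeq k n : ℤ) : ℝ) < ((aSeq k (n+1) : ℤ) : ℝ) := by
    have : ((aSeq k n + 1: ℤ) : ℝ) < ((aSeq k (n+1) + 1 : ℤ) : ℝ) := by push_cast; linarith
    have := Int.cast_lt.mp this
    exact Int.cast_lt.mpr (by omega)
  have e1 := Int.cast_lt.mp e1
  have e2 : ((aSeq k (n+1) : ℤ) : ℝ) < ((aSeq k n + 3 : ℤ) : ℝ) := by push_cast; linarith
  have e2 := Int.cast_lt.mp e2
  omega

lemma b_step (k n : ℕ) (hk : 1 ≤ k) :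
    bSeq k (n+1) = bSeq k n + k + 1 ∨ bSeq k (n+1) = bSeq k n + k + 2 := by
  have h1 := b_lt k n
  have h2 := b_le k n
  have h3 := b_lt k (n+1)
  have h4 := b_le k (n+1)
  have h5 := kal_gt k hk
  have h6 := kal_lt k hk
  push_cast at h3 h4
  have e1 : ((bSeq k n + k + 1: ℤ) : ℝ) < ((bSeq k (n+1) + 1 : ℤ) : ℝ) := by push_cast; linarith
  have e1 := Int.cast_lt.mp e1
  have e2 : ((bSeq k (n+1) : ℤ) : ℝ) < ((bSeq k n + k + 3 : ℤ) : ℝ) := by push_cast; linarith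
  have e2 := Int.cast_lt.mp e2
  omega

/-- one step -/
lemma ab_step (k n : ℕ) (hk : 1 ≤ k) :
    (aSeq k (n+1) = aSeq k n + 1 ∧ bSeq k (n+1) = bSeq k n + k + 1) ∨
    (aSeq k (n+1) = aSeq k n + 1 ∧ bSeq k (n+1) = bSeq k n + k + 2) ∨
    (aSeq k (n+1) = aSeq k n + 2 ∧ bSeq k (n+1) = bSeq k n + k + 2) := by
  have h1 := r_nonneg k (n+1) hk
  have h2 := r_lt k n hk
  push_cast at h1
  rcases a_step k n hk with ha | ha <;> rcases b_step k n hk with hb | hb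
  · exact .inl ⟨ha, hb⟩
  · exact .inr (.inl ⟨ha, hb⟩)
  · exfalso
    rw [ha, hb] at h1
    have : (k:ℤ) * (aSeq k n + 2) = k * aSeq k n + 2 * k := by ring
    omega
  · exact .inr (.inr ⟨ha, hb⟩)

lemma ab_add (k n d : ℕ) (hk : 1 ≤ k) :
    aSeq k n + d ≤ aSeq k (n+d) ∧
      (bSeq k n - aSeq k n) + k * d ≤ bSeq k (n+d) - aSeq k (n+d) := by
  induction d with
  | zero => simp
  | succ d ih =>
    have := ab_step k (n+d) hk
    rw [← add_assoc]
    push_cast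
    have e : (k:ℤ) * (d+1) = k * d + k := by ring
    rw [e]
    omega

lemma ab_lt (k m n : ℕ) (hk : 1 ≤ k) (h : m < n) :
    aSeq k m < aSeq k n ∧ bSeq k m < bSeq k n ∧
      (bSeq k m - aSeq k m) + k ≤ bSeq k n - aSeq k n := by
  obtain ⟨d, rfl⟩ := Nat.exists_eq_add_of_lt h
  have := ab_add k m (d+1) hk
  rw [← add_assoc] at this
  have e : (k:ℤ) * ((d+1:ℕ):ℤ) = k * d + k := by push_cast; ring
  rw [e] at this
  have : 0 ≤ (k:ℤ) * d := by positivity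
  omega

lemma ab_nonneg (k n : ℕ) (hk : 1 ≤ k) :
    (n:ℤ) ≤ aSeq k n ∧ 0 ≤ bSeq k n - aSeq k n ∧ (1 ≤ n → (k:ℤ) ≤ bSeq k n - aSeq k n) := by
  have := ab_add k 0 n hk
  simp only [zero_add, a_zero, b_zero] at this
  have h : 0 ≤ (k:ℤ) * n := by positivity
  refine ⟨by omega, by omega, fun hn => ?_⟩
  have := ab_lt k 0 n hk hn
  simp only [a_zero, b_zero] at this
  omega

lemma holder (k : ℕ) (hk : 1 ≤ k) : (alphaK k).HolderConjugate (betaK k) := by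
  have h1 := al_sq k hk
  have h2 := al_gt k hk
  have hk' : (0:ℝ) < k := by exact_mod_cast hk
  rw [Real.holderConjugate_iff]
  refine ⟨h2, ?_⟩
  have hb : betaK k = k * alphaK k ^ 2 := by rw [h1]; rfl
  rw [hb]
  field_simp
  linarith

lemma ab_disj (k m n : ℕ) (hk : 1 ≤ k) (h : aSeq k n = bSeq k m) : n = 0 ∧ m = 0 := by
  have hn := ab_nonneg k n hk
  have hm := ab_nonneg k m hk
  rcases Nat.eq_zero_or_pos n with rfl | hn0
  · rw [a_zero] at h
    exact ⟨rfl, by omega⟩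
  rcases Nat.eq_zero_or_pos m with rfl | hm0
  · rw [b_zero] at h
    omega
  exfalso
  have := (al_irr k hk).beattySeq_symmDiff_beattySeq_pos (holder k hk)
  have hx : aSeq k n ∈ {x : ℤ | 0 < x} := by
    show 0 < aSeq k n
    omega
  rw [← this, Set.mem_symmDiff] at hx
  have p1 : aSeq k n ∈ {x | ∃ j : ℤ, 0 < j ∧ beattySeq (alphaK k) j = x} :=
    ⟨n, by omega, by simp [beattySeq, aSeq]⟩
  have p2 : aSeq k n ∈ {x | ∃ j : ℤ, 0 < j ∧ beattySeq (betaK k) j = x} :=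
    ⟨m, by omega, by rw [h]; simp [beattySeq, bSeq]⟩
  tauto

lemma ab_cover (k x : ℕ) (hk : 1 ≤ k) : ∃ n : ℕ, (x:ℤ) = aSeq k n ∨ (x:ℤ) = bSeq k n := by
  rcases Nat.eq_zero_or_pos x with rfl | hx0
  · exact ⟨0, by simp [a_zero]⟩
  have := (al_irr k hk).beattySeq_symmDiff_beattySeq_pos (holder k hk)
  have hx : (x:ℤ) ∈ {x : ℤ | 0 < x} := by
    show 0 < (x:ℤ)
    omega
  rw [← this, Set.mem_symmDiff] at hx
  rcases hx with ⟨⟨j, hj, h⟩, _⟩ | ⟨⟨j, hj, h⟩, _⟩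
  · lift j to ℕ using hj.le
    exact ⟨j, .inl (by rw [← h]; simp [beattySeq, aSeq])⟩
  · lift j to ℕ using hj.le
    exact ⟨j, .inr (by rw [← h]; simp [beattySeq, bSeq])⟩

lemma F_succ (k i j : ℕ) : (fg k i (j+1)).1 = (fg k i j).1 + (fg k i j).2 := rfl
lemma G_succ (k i j : ℕ) : (fg k i (j+1)).2 = (fg k i j).2 + k * (fg k i (j+1)).1 + i := by
  simp only [fg]; ring

/-- ε_j -/
noncomputable def ep (k i j : ℕ) : ℝ :=
  k * ((fg k i j).2 * alphaK k - (fg k i (j+1)).1) - i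

lemma ep_succ (k i j : ℕ) (hk : 1 ≤ k) :
    (k * alphaK k + 1) * ep k i (j+1) = ep k i j := by
  have h := al_sq k hk
  unfold ep
  rw [F_succ k i (j+1), G_succ k i j]
  push_cast
  linear_combination (k:ℝ) * ((fg k i j).2 + k * (fg k i (j+1)).1 + i) * h

lemma ep_pow (k i j : ℕ) (hk : 1 ≤ k) :
    ep k i j * (k * alphaK k + 1) ^ j = (i+1) * (k * (alphaK k - 1)) - i := by
  induction j with
  | zero => simp [ep, fg]; ring
  | succ j ih =>
    rw [← ih, ← ep_succ k i j hk]; ring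

lemma E_pos (k i : ℕ) (hk : 1 ≤ k) (hi : i + 1 ≤ k) :
    0 < ((i:ℝ)+1) * (k * (alphaK k - 1)) - i := by
  have h := al_sq k hk
  have h1 := al_gt k hk
  have h2 := kal_lt k hk
  have hk' : (0:ℝ) < k := by exact_mod_cast hk
  have hi' : (i:ℝ) + 1 ≤ k := by exact_mod_cast hi
  have hi0 : (0:ℝ) ≤ i := by positivity
  have : 0 < (((i:ℝ)+1) * (k * (alphaK k - 1)) - i) * (k * alphaK k) := by
    have e : (((i:ℝ)+1) * (k * (alphaK k - 1)) - i) * (k * alphaK k)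
      = (i+1) * k - i * (k * alphaK k) := by
      linear_combination ((i:ℝ)+1) * k * h
    rw [e]
    nlinarith
  exact pos_of_mul_pos_left this (by positivity)

lemma ep_pos (k i j : ℕ) (hk : 1 ≤ k) (hi : i + 1 ≤ k) : 0 < ep k i j := by
  have h := ep_pow k i j hk
  have h2 := E_pos k i hk hi
  have h1 := al_gt k hk
  rw [← h] at h2
  exact pos_of_mul_pos_left h2 (by positivity)

lemma ep_lt (k i j : ℕ) (hk : 1 ≤ k) (hi : i + 1 ≤ k) : ep k i j < 1 := by
  have h1 := kal_gt k hk
  have h2 := kal_lt k hk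
  have hk' : (0:ℝ) < k := by exact_mod_cast hk
  induction j with
  | zero =>
    have := ep_pow k i 0 hk
    simp only [pow_zero, mul_one] at this
    rw [this]
    have hi0 : (0:ℝ) ≤ i := by positivity
    nlinarith
  | succ j ih =>
    have := ep_succ k i j hk
    have := ep_pos k i (j+1) hk hi
    nlinarith

lemma G_le (k i j : ℕ) (hk : 1 ≤ k) (hi : i + 1 ≤ k) : ∀ p q : ℤ, 1 ≤ p →
    0 ≤ (q:ℝ) - p * alphaK k →
    ((q:ℝ) - p * alphaK k) * (k * alphaK k + 1)^j < 1 - i * (alphaK k - 1) →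
    ((fg k i j).2 : ℤ) ≤ p := by
  have h := al_sq k hk
  have h1 := al_gt k hk
  have hk' : (0:ℝ) < k := by exact_mod_cast hk
  induction j with
  | zero =>
    intro p q hp h0 hlt
    simp only [pow_zero, mul_one] at hlt
    by_contra hc
    simp only [fg] at hc
    push_cast at hc
    have hpi : p ≤ i := by omega
    have hpi' : (p:ℝ) ≤ i := by exact_mod_cast hpi
    have hp' : (1:ℝ) ≤ p := by exact_mod_cast hp
    have hq : (p:ℝ) < q := by nlinarith
    have hq : p + 1 ≤ q := by exact_mod_cast hq
    have hq' : (p:ℝ) + 1 ≤ q := by exact_mod_cast hq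
    nlinarith
  | succ j ih =>
    intro p q hp h0 hlt
    have hp' : (1:ℝ) ≤ p := by exact_mod_cast hp
    have hq : (p:ℝ) < q := by nlinarith
    have hq : p + 1 ≤ q := by exact_mod_cast hq
    have hi0 : (0:ℝ) ≤ i := by positivity
    obtain ⟨q1, hq1⟩ : ∃ q1, q1 = q - p := ⟨_, rfl⟩
    obtain ⟨p1, hp1⟩ : ∃ p1, p1 = p - k * q1 := ⟨_, rfl⟩
    have hw : (q1:ℝ) - p1 * alphaK k = (q - p * alphaK k) * (k * alphaK k + 1) := by
      rw [hp1, hq1]; push_cast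
      linear_combination (p:ℝ) * h
    have hb1 : 1 ≤ (k:ℝ) * alphaK k + 1 := by nlinarith
    have hw0 : 0 ≤ (q1:ℝ) - p1 * alphaK k := by
      rw [hw]; positivity
    have hlt1 : ((q1:ℝ) - p1 * alphaK k) * (k * alphaK k + 1)^j < 1 - i * (alphaK k - 1) := by
      rw [hw]; calc _ = _ := by ring
        _ < _ := hlt
    have hw1 : (q1:ℝ) - p1 * alphaK k < 1 := by
      have : (q1:ℝ) - p1 * alphaK k ≤ ((q1:ℝ) - p1 * alphaK k) * (k * alphaK k + 1)^j :=
        le_mul_of_one_le_right hw0 (one_le_pow₀ hb1)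
      nlinarith
    have hq1' : 1 ≤ q1 := by omega
    have hq1r : (1:ℝ) ≤ q1 := by exact_mod_cast hq1'
    have hp1' : 1 ≤ p1 := by
      by_contra hc
      have : p1 ≤ 0 := by omega
      have : (p1:ℝ) ≤ 0 := by exact_mod_cast this
      nlinarith
    have hG := ih p1 q1 hp1' hw0 hlt1
    have hG' : ((fg k i j).2 : ℝ) ≤ p1 := by exact_mod_cast hG
    have he := ep_pos k i j hk hi
    unfold ep at he
    have hF : ((fg k i (j+1)).1 : ℝ) < q1 := by
      have : 0 < (fg k i j).2 * alphaK k - (fg k i (j+1)).1 := by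
        by_contra hc
        push Not at hc
        nlinarith
      nlinarith
    have hF : ((fg k i (j+1)).1 : ℤ) + 1 ≤ q1 := by exact_mod_cast hF
    rw [G_succ]
    push_cast
    have hp2 : p = p1 + k * q1 := by omega
    have : (k:ℤ) * ((fg k i (j+1)).1 + 1) ≤ k * q1 :=
      mul_le_mul_of_nonneg_left hF (by positivity)
    have e : (k:ℤ) * ((fg k i (j+1)).1 + 1) = k * (fg k i (j+1)).1 + k := by ring
    omega

/-- the crucial Type III move -/
lemma key (k n i : ℕ) (hk : 1 ≤ k) (hi0 : 1 ≤ i) (hi : i + 1 ≤ k)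
    (hr : bSeq k n = k * aSeq k n + n + i) :
    ∃ j m : ℕ, aSeq k n = aSeq k m + (fg k i (j+1)).1 ∧
      bSeq k n = bSeq k m + (fg k i (j+1)).2 := by
  have hk' : (0:ℝ) < k := by exact_mod_cast hk
  have hs := al_sq k hk
  have hg := al_gt k hk
  have hkg := kal_gt k hk
  obtain ⟨t, ht⟩ : ∃ t : ℝ, t = n * alphaK k - aSeq k n := ⟨_, rfl⟩
  have hrr : (bSeq k n : ℝ) = k * aSeq k n + n + i := by exact_mod_cast hr
  have hb1 := b_le k n
  have hb2 := b_lt k n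
  have ht1 : t < 1 := by have := a_lt k n; linarith
  have htu : k * t < i + 1 := by
    rw [ht]; linarith
  have hn0 : n ≠ 0 := by
    rintro rfl
    rw [a_zero, b_zero] at hr
    simp at hr
    omega
  have htl : (i:ℝ) < k * t := by
    have h1 : (i:ℝ) ≤ k * t := by rw [ht]; linarith
    refine lt_of_le_of_ne h1 ?_
    intro he
    have hir := (al_irr k hk).natCast_mul (m := k * n) (by positivity)
    apply hir
    refine ⟨((k * aSeq k n + i : ℤ) : ℚ), ?_⟩
    push_cast
    rw [he, ht]; ring
  have hex : ∃ j, ep k i j ≤ k * t - i := by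
    have hE := E_pos k i hk hi
    obtain ⟨j, hj⟩ := pow_unbounded_of_one_lt
      ((((i:ℝ)+1) * (k * (alphaK k - 1)) - i) / (k * t - i))
      (show 1 < (k:ℝ) * alphaK k + 1 by linarith)
    refine ⟨j, ?_⟩
    rw [div_lt_iff₀ (by linarith), ← ep_pow k i j hk] at hj
    have hp : 0 < ((k:ℝ) * alphaK k + 1)^j := by positivity
    by_contra hc
    push Not at hc
    nlinarith
  classical
  obtain ⟨j, hj, hmin⟩ : ∃ j, ep k i j ≤ k * t - i ∧
      (k * t - i - ep k i j) * (k * alphaK k + 1)^j < k * (1 - i * (alphaK k - 1)) := by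
    refine ⟨Nat.find hex, Nat.find_spec hex, ?_⟩
    rcases hf : Nat.find hex with _ | j
    · have := ep_pow k i 0 hk
      simp only [pow_zero, mul_one] at this ⊢
      rw [this]
      nlinarith
    · have hlt : k * t - i < ep k i j := by
        have := Nat.find_min hex (m := j) (by omega)
        push Not at this
        exact this
      have e1 := ep_pow k i j hk
      have e2 := ep_pow k i (j+1) hk
      have hp : 0 < ((k:ℝ) * alphaK k + 1)^(j+1) := by positivity
      calc _ < (ep k i j - ep k i (j+1)) * (k * alphaK k + 1)^(j+1) := by
              apply mul_lt_mul_of_pos_right _ hp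
              linarith
        _ = (k * alphaK k + 1) * (ep k i j * (k * alphaK k + 1)^j)
            - ep k i (j+1) * (k * alphaK k + 1)^(j+1) := by ring
        _ = k * (1 - i * (alphaK k - 1)) := by
          rw [e1, e2]
          linear_combination ((i:ℝ)+1) * k * hs
  have hpos := ep_pos k i j hk hi
  -- the difference
  have hdiff : k * t - i - ep k i j =
      k * (((n:ℝ) - (fg k i j).2) * alphaK k - (aSeq k n - (fg k i (j+1)).1)) := by
    rw [ht]; unfold ep; ring
  have hn : (fg k i j).2 ≤ n := by
    by_contra hc
    push Not at hc
    have := G_le k i j hk hi ((fg k i j).2 - n) ((fg k i (j+1)).1 - aSeq k n) (by omega)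
    push_cast at this
    have e : ((fg k i (j+1)).1 - aSeq k n : ℝ) - ((fg k i j).2 - n) * alphaK k =
        (((n:ℝ) - (fg k i j).2) * alphaK k - (aSeq k n - (fg k i (j+1)).1)) := by ring
    rw [e] at this
    have h0 : 0 ≤ (((n:ℝ) - (fg k i j).2) * alphaK k - (aSeq k n - (fg k i (j+1)).1)) := by
      by_contra hc
      push Not at hc
      nlinarith
    have h3 := this h0 (by
      rw [hdiff, mul_assoc] at hmin
      exact lt_of_mul_lt_mul_left hmin hk'.le)
    omega
  have h0 : 0 ≤ (((n:ℝ) - (fg k i j).2) * alphaK k - (aSeq k n - (fg k i (j+1)).1)) := by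
    by_contra hc
    push Not at hc
    nlinarith
  have h1 : k * (((n:ℝ) - (fg k i j).2) * alphaK k - (aSeq k n - (fg k i (j+1)).1)) < 1 := by
    rw [← hdiff]; linarith
  have hk1 : (1:ℝ) ≤ k := by exact_mod_cast hk
  refine ⟨j, n - (fg k i j).2, ?_, ?_⟩
  · have : aSeq k (n - (fg k i j).2) = aSeq k n - (fg k i (j+1)).1 := by
      unfold aSeq
      rw [Int.floor_eq_iff]
      rw [Nat.cast_sub hn]
      change (((aSeq k n - (fg k i (j+1)).1 : ℤ)) : ℝ) ≤ _ ∧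
        _ < (((aSeq k n - (fg k i (j+1)).1 : ℤ)) : ℝ) + 1
      push_cast
      constructor <;> nlinarith
    omega
  · have : bSeq k (n - (fg k i j).2) = n - (fg k i j).2 + k * (aSeq k n - (fg k i (j+1)).1) := by
      unfold bSeq betaK
      rw [Int.floor_eq_iff]
      rw [Nat.cast_sub hn]
      push_cast
      constructor <;> nlinarith
    rw [this, hr, G_succ]
    push_cast
    ring

lemma a_nat (k n : ℕ) (hk : 1 ≤ k) : ∃ A : ℕ, (A:ℤ) = aSeq k n :=
  ⟨(aSeq k n).toNat, Int.toNat_of_nonneg (by have := ab_nonneg k n hk; omega)⟩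

lemma b_nat (k n : ℕ) (hk : 1 ≤ k) : ∃ A : ℕ, (A:ℤ) = bSeq k n :=
  ⟨(bSeq k n).toNat, Int.toNat_of_nonneg (by have := ab_nonneg k n hk; omega)⟩

lemma no3_1 (k n m i j : ℕ) (hi0 : 1 ≤ i) (hi : i + 1 ≤ k)
    (h : bSeq k n = bSeq k m + (fg k i (j+1)).2 - 1) : False := by
  have hk : 1 ≤ k := by omega
  have h1 := b_le k n
  have h2 := b_lt k n
  have h3 := b_le k m
  have h4 := b_lt k m
  have h5 := ep_pos k i j hk hi
  have h6 := ep_lt k i j hk hi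
  have h7 := kal_gt k hk
  have hk2 : (2:ℝ) ≤ k := by exact_mod_cast (by omega : 2 ≤ k)
  rw [G_succ] at h
  have hr : (bSeq k n : ℝ) = bSeq k m +
      ((fg k i j).2 + k * (fg k i (j+1)).1 + i) - 1 := by exact_mod_cast h
  unfold ep at h5 h6
  obtain ⟨w, hw⟩ : ∃ w : ℤ, w = n - m - (fg k i j).2 := ⟨_, rfl⟩
  have hwr : (w:ℝ) = n - m - (fg k i j).2 := by rw [hw]; push_cast; ring
  have hw1 : (w:ℝ) * (k * alphaK k + 1) < 0 := by rw [hwr]; linarith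
  have hw2 : -3 < (w:ℝ) * (k * alphaK k + 1) := by rw [hwr]; linarith
  rcases le_or_gt 0 w with hc | hc
  · have : (0:ℝ) ≤ w := by exact_mod_cast hc
    nlinarith
  · have : (w:ℝ) ≤ -1 := by exact_mod_cast (by omega : w ≤ -1)
    nlinarith

lemma no3_2 (k n m i j : ℕ) (hi0 : 1 ≤ i) (hi : i + 1 ≤ k)
    (ha : aSeq k n = bSeq k m + (fg k i (j+1)).1)
    (h : bSeq k n = aSeq k m + (fg k i (j+1)).2 - 1) : False := by
  have hk : 1 ≤ k := by omega
  rcases Nat.eq_zero_or_pos m with rfl | hm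
  · rw [a_zero] at h
    exact no3_1 k n 0 i j hi0 hi (by rw [b_zero]; exact h)
  have hs := al_sq k hk
  have hg := al_gt k hk
  have h1 := b_lt k n
  have h2 := a_le k n
  have h6 := ep_lt k i j hk hi
  have h5 := ep_pos k i j hk hi
  have h7 := kal_gt k hk
  have hk2 : (2:ℝ) ≤ k := by exact_mod_cast (by omega : 2 ≤ k)
  have hi' : (i:ℝ) + 1 ≤ k := by exact_mod_cast hi
  rw [G_succ] at h
  have hr : (bSeq k n : ℝ) = aSeq k m +
      ((fg k i j).2 + k * (fg k i (j+1)).1 + i) - 1 := by exact_mod_cast h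
  have har : (aSeq k n : ℝ) = bSeq k m + (fg k i (j+1)).1 := by exact_mod_cast ha
  have e1 : ((fg k i j).2 + k * (fg k i (j+1)).1 + i : ℝ) - k * alphaK k * (fg k i (j+1)).1
      = alphaK k * (i + ep k i j) - ep k i j := by
    unfold ep
    linear_combination (-((fg k i j).2 : ℝ)) * hs
  have e2 : ((fg k i j).2 + k * (fg k i (j+1)).1 + i : ℝ)
      - k * alphaK k * (fg k i (j+1)).1 < k * alphaK k - 1 := by rw [e1]; nlinarith
  have e3 : -1 < (bSeq k n : ℝ) - k * alphaK k * aSeq k n := by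
    have : (k:ℝ) * alphaK k * aSeq k n ≤ k * alphaK k * (n * alphaK k) :=
      mul_le_mul_of_nonneg_left h2 (by linarith)
    have : (k:ℝ) * alphaK k * (n * alphaK k) = n * (k * alphaK k + 1) := by
      linear_combination (n:ℝ) * hs
    linarith
  have e4 : (k * alphaK k) * bSeq k m - aSeq k m < k * alphaK k - 1 := by
    rw [hr, har] at e3
    linarith
  have hb := ab_nonneg k m hk
  have hb1 : aSeq k m ≤ bSeq k m := by omega
  have hb2 : 2 ≤ bSeq k m := by omega
  have hb1' : (aSeq k m : ℝ) ≤ bSeq k m := by exact_mod_cast hb1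
  have hb2' : (2:ℝ) ≤ bSeq k m := by exact_mod_cast hb2
  nlinarith

lemma Gamma_swap (k : ℕ) (p q : ℕ × ℕ) (h : GammaMove k p q) :
    GammaMove k p.swap q.swap := by
  rcases h with ⟨n, hn, hc⟩ | ⟨s, t, hs, ht, h1, h2, hc⟩ | ⟨i, n, hi, hik, hn, hc⟩
  · exact .inl ⟨n, hn, by simp only [Prod.fst_swap, Prod.snd_swap]; tauto⟩
  · exact .inr (.inl ⟨s, t, hs, ht, h1, h2, by simp only [Prod.fst_swap, Prod.snd_swap]; tauto⟩)
  · exact .inr (.inr ⟨i, n, hi, hik, hn, by simp only [Prod.fst_swap, Prod.snd_swap]; tauto⟩)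

lemma S_swap (k : ℕ) (p : ℕ × ℕ) (h : p ∈ SbarK k) : p.swap ∈ SbarK k := by
  obtain ⟨n, h⟩ := h
  exact ⟨n, by simp only [Prod.fst_swap, Prod.snd_swap]; tauto⟩

lemma no_move_aux (k n x y : ℕ) (hk : 1 ≤ k) (hx : (x:ℤ) = aSeq k n) (hy : (y:ℤ) = bSeq k n)
    (q : ℕ × ℕ) (hq : q ∈ SbarK k) (h : GammaMove k (x, y) q) : False := by
  obtain ⟨u, v⟩ := q
  obtain ⟨m, hq⟩ := hq
  simp only at hq
  have hlt := gammaMove_lt k _ _ h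
  simp only at hlt
  have hn := ab_nonneg k n hk
  have hm := ab_nonneg k m hk
  have hcmp : (m < n ∧ aSeq k m < aSeq k n ∧ bSeq k m < bSeq k n ∧
      (bSeq k m - aSeq k m) + k ≤ bSeq k n - aSeq k n) ∨
      (n < m ∧ aSeq k n < aSeq k m ∧ bSeq k n < bSeq k m ∧
      (bSeq k n - aSeq k n) + k ≤ bSeq k m - aSeq k m) := by
    rcases lt_trichotomy m n with h | h | h
    · exact .inl ⟨h, ab_lt k m n hk h⟩
    · exfalso
      subst h
      omega
    · exact .inr ⟨h, ab_lt k n m hk h⟩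
  have hd1 : aSeq k n ≠ bSeq k m := fun h => by
    have := ab_disj k m n hk h
    omega
  have hd2 : aSeq k m ≠ bSeq k n := fun h => by
    have := ab_disj k n m hk h
    omega
  rcases h with ⟨s, hs, hc⟩ | ⟨s, t, hs, ht, h1, h2, hc⟩ | ⟨i, j, hi0, hi, hj, hc⟩
  · simp only at hc
    omega
  · simp only at hc
    have hn1 : 1 ≤ n → (k:ℤ) ≤ bSeq k n - aSeq k n := hn.2.2
    have hn2 : n = 0 ∨ (k:ℤ) ≤ bSeq k n - aSeq k n := by
      rcases Nat.eq_zero_or_pos n with h | h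
      · exact .inl h
      · exact .inr (hn1 h)
    rcases hn2 with rfl | hn2
    · rw [a_zero] at hx
      omega
    · omega
  · obtain ⟨j, rfl⟩ : ∃ j', j = j' + 1 := ⟨j - 1, by omega⟩
    simp only at hc
    have hpos := fg_snd_pos k i (j+1)
    have hpos' := fg_snd_pos k i j
    have hF := F_succ k i j
    have hGF : (fg k i (j+1)).1 + 1 < (fg k i (j+1)).2 := by
      rw [G_succ k i j]
      have : 1 * (fg k i (j+1)).1 ≤ k * (fg k i (j+1)).1 := Nat.mul_le_mul_right _ hk
      omega
    rcases hc with hc | hc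
    · rcases hq with hq | hq
      · exact no3_1 k n m i j hi0 hi (by omega)
      · exact no3_2 k n m i j hi0 hi (by omega) (by omega)
    · omega

lemma no_move (k : ℕ) (hk : 1 ≤ k) (p q : ℕ × ℕ) (hp : p ∈ SbarK k) (hq : q ∈ SbarK k)
    (h : GammaMove k p q) : False := by
  obtain ⟨n, hp | hp⟩ := hp
  · exact no_move_aux k n p.1 p.2 hk hp.1 hp.2 q hq h
  · exact no_move_aux k n p.2 p.1 hk hp.2 hp.1 q.swap (S_swap k q hq) (Gamma_swap k p q h)

lemma move_mid (k n x y : ℕ) (hk : 1 ≤ k) (hx : (x:ℤ) = aSeq k n) (hxy : x ≤ y)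
    (hy : (y:ℤ) < bSeq k n) : ∃ q ∈ SbarK k, GammaMove k (x, y) q := by
  classical
  have hex : ∃ m, (y:ℤ) - x < bSeq k m - aSeq k m := ⟨n, by omega⟩
  obtain ⟨m, hmn, hm1, hm2⟩ : ∃ m, m < n ∧ bSeq k m - aSeq k m ≤ (y:ℤ) - x ∧
      (y:ℤ) - x < bSeq k (m+1) - aSeq k (m+1) := by
    have hsp := Nat.find_spec hex
    have hle : Nat.find hex ≤ n := Nat.find_min' hex (by omega)
    have hmin := fun m => Nat.find_min hex (m := m)
    rcases hf : Nat.find hex with _ | m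
    · rw [hf, a_zero, b_zero] at hsp
      omega
    · rw [hf] at hsp hle
      have := hmin m (by omega)
      exact ⟨m, by omega, by omega, hsp⟩
  have hlt := ab_lt k m n hk hmn
  obtain ⟨A, hA⟩ := a_nat k m hk
  obtain ⟨B, hB⟩ := b_nat k m hk
  rcases lt_or_ge ((y:ℤ) - x) (bSeq k m - aSeq k m + k) with hc | hc
  · refine ⟨(A, B), ⟨m, .inl ⟨hA, hB⟩⟩, .inr (.inl ⟨x - A, y - B, ?_⟩)⟩
    simp only
    omega
  have hst := ab_step k m hk
  have hst : aSeq k (m+1) = aSeq k m + 1 ∧ bSeq k (m+1) = bSeq k m + k + 2 := by omega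
  have hr1 := r_nonneg k m hk
  have hr2 := r_lt k (m+1) hk
  have e : (k:ℤ) * (aSeq k m + 1) = k * aSeq k m + k := by ring
  rcases Nat.lt_or_ge (m+1) n with hmn' | hmn'
  · obtain ⟨A, hA⟩ := a_nat k (m+1) hk
    obtain ⟨B, hB⟩ := b_nat k (m+1) hk
    have hlt := ab_lt k (m+1) n hk hmn'
    rw [hst.1, hst.2, e] at hr2
    push_cast at hr2
    have hk2 : 2 ≤ k := by omega
    refine ⟨(A, B), ⟨m+1, .inl ⟨hA, hB⟩⟩, ?_⟩
    rcases Nat.eq_or_lt_of_le (show B ≤ y by omega) with hB' | hB'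
    · refine .inl ⟨x - A, ?_⟩
      simp only
      omega
    · refine .inr (.inl ⟨x - A, y - B, ?_⟩)
      simp only
      omega
  · obtain rfl : n = m + 1 := by omega
    obtain ⟨i, hi⟩ : ∃ i : ℕ, (i:ℤ) = bSeq k (m+1) - (k * aSeq k (m+1) + (m+1:ℕ)) :=
      ⟨_, Int.toNat_of_nonneg (by have := r_nonneg k (m+1) hk; omega)⟩
    have hi1 : i + 1 ≤ k := by omega
    have hi0 : 1 ≤ i := by
      rw [hst.1, hst.2, e] at hi
      push_cast at hi
      omega
    obtain ⟨j, l, h1, h2⟩ := key k (m+1) i hk hi0 hi1 (by omega)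
    obtain ⟨A, hA⟩ := a_nat k l hk
    obtain ⟨B, hB⟩ := b_nat k l hk
    have := fg_snd_pos k i (j+1)
    refine ⟨(A, B), ⟨l, .inl ⟨hA, hB⟩⟩, .inr (.inr ⟨i, j+1, hi0, hi1, by omega, .inl ?_⟩)⟩
    simp only
    omega

lemma move_aux (k x y : ℕ) (hk : 1 ≤ k) (hxy : x ≤ y) (h : (x, y) ∉ SbarK k) :
    ∃ q ∈ SbarK k, GammaMove k (x, y) q := by
  obtain ⟨n, hn | hn⟩ := ab_cover k x hk
  · obtain ⟨B, hB⟩ := b_nat k n hk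
    rcases lt_trichotomy (y:ℤ) (bSeq k n) with hy | hy | hy
    · exact move_mid k n x y hk hn hxy hy
    · exact absurd ⟨n, .inl ⟨hn, hy⟩⟩ h
    · refine ⟨(x, B), ⟨n, .inl ⟨hn, hB⟩⟩, .inl ⟨y - B, by omega, .inr ⟨rfl, ?_⟩⟩⟩
      simp only
      omega
  · obtain ⟨A, hA⟩ := a_nat k n hk
    have := ab_nonneg k n hk
    have hne : y ≠ A := by
      rintro rfl
      exact h ⟨n, .inr ⟨hn, hA⟩⟩
    refine ⟨(x, A), ⟨n, .inr ⟨hn, hA⟩⟩, .inl ⟨y - A, by omega, .inr ⟨rfl, ?_⟩⟩⟩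
    simp only
    omega

lemma move_ex (k : ℕ) (hk : 1 ≤ k) (p : ℕ × ℕ) (h : p ∉ SbarK k) :
    ∃ q ∈ SbarK k, GammaMove k p q := by
  obtain ⟨x, y⟩ := p
  rcases le_total x y with hxy | hxy
  · exact move_aux k x y hk hxy h
  · obtain ⟨q, hq, hm⟩ := move_aux k y x hk hxy (fun hc => h (S_swap k _ hc))
    exact ⟨q.swap, S_swap k q hq, Gamma_swap k _ _ hm⟩

/-- The set of P-positions of the game Γ_k is exactly S̄_k. -/
theorem ppositions_eq_Sbar (k : ℕ) (hk : 1 ≤ k) :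
    ∀ p : ℕ × ℕ, Ppos k p ↔ p ∈ SbarK k := by
  have main : ∀ N : ℕ, ∀ p : ℕ × ℕ, p.1 + p.2 = N → (Ppos k p ↔ p ∈ SbarK k) := by
    intro N
    induction N using Nat.strong_induction_on with
    | _ N ih =>
      intro p hp
      rw [Ppos]
      constructor
      · intro h
        by_contra hc
        obtain ⟨q, hq, hm⟩ := move_ex k hk p hc
        have hl := gammaMove_lt k p q hm
        exact h q hm ((ih _ (by omega) q rfl).2 hq)
      · intro h q hm hP
        have hl := gammaMove_lt k p q hm
        exact no_move k hk p q h ((ih _ (by omega) q rfl).1 hP) hm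
  exact fun p => main _ p rfl
end

section
/- Let k ≥ 2 be an integer, α = (1+√(1+4/k))/2, β = kα+1, a_n = ⌊nα⌋, b_n = ⌊nβ⌋. Fix i ∈ {1,…,k−1} and r ≥ 1, and set (p,q) = (f^i_r, g^i_r − 1). Then for all integers m ≥ 0 and n ≥ 0 none of the following hold: (a_m − p, b_m − q) = (a_n, b_n); (a_m − p, b_m − q) = (b_n, a_n); (a_m − q, b_m − p) = (a_n, b_n); (a_m − q, b_m − p) = (b_n, a_n). (No move of Type III connects two positions of the form (a_m,b_m).) -/
lemma alpha_facts (k : ℕ) (hk : 2 ≤ k) :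
    1 < alphaK k ∧ (k:ℝ) * (alphaK k * (alphaK k - 1)) = 1 := by
  have hk0 : (0:ℝ) < k := by positivity
  have h4 : 0 < 4 / (k:ℝ) := by positivity
  have hs := Real.sq_sqrt (show (0:ℝ) ≤ 1 + 4 / k by positivity)
  have h1 : 1 < Real.sqrt (1 + 4 / k) := by
    rw [Real.lt_sqrt] <;> linarith
  unfold alphaK
  constructor
  · linarith
  · have : (1 + √(1 + 4 / (k:ℝ))) / 2 * ((1 + √(1 + 4 / (k:ℝ))) / 2 - 1) = 1 / k := by
      have e : (1 + √(1 + 4 / (k:ℝ))) / 2 * ((1 + √(1 + 4 / (k:ℝ))) / 2 - 1)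
          = (√(1 + 4 / (k:ℝ)) ^ 2 - 1) / 4 := by ring
      rw [e, hs]; ring
    rw [this]; field_simp

lemma seq_facts (k : ℕ) (hk : 2 ≤ k) (n : ℕ) : ∃ (x : ℝ) (s : ℤ),
    0 ≤ x ∧ x < 1 ∧ (n:ℝ) * alphaK k = aSeq k n + x ∧ (s:ℝ) ≤ k * x ∧ (k:ℝ) * x < s + 1 ∧
    bSeq k n = k * aSeq k n + n + s ∧ 0 ≤ s ∧ s ≤ k - 1 ∧ (n:ℤ) ≤ aSeq k n := by
  obtain ⟨hα, -⟩ := alpha_facts k hk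
  have hk0 : (0:ℝ) < k := by positivity
  have hx0 := Int.fract_nonneg ((n:ℝ) * alphaK k)
  have hx1 := Int.fract_lt_one ((n:ℝ) * alphaK k)
  refine ⟨Int.fract ((n:ℝ) * alphaK k), ⌊(k:ℝ) * Int.fract ((n:ℝ) * alphaK k)⌋,
    hx0, hx1, ?_, Int.floor_le _, Int.lt_floor_add_one _, ?_, ?_, ?_, ?_⟩
  · unfold aSeq; exact (Int.floor_add_fract _).symm
  · unfold bSeq betaK aSeq
    have h : (n:ℝ) * (k * alphaK k + 1)
      = k * Int.fract ((n:ℝ) * alphaK k) + ((k * ⌊(n:ℝ) * alphaK k⌋ + n : ℤ) : ℝ) := by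
      push_cast
      have := Int.floor_add_fract ((n:ℝ) * alphaK k)
      linear_combination -(k:ℝ) * this
    rw [h, Int.floor_add_intCast]; ring
  · apply Int.floor_nonneg.2; positivity
  · apply Int.le_sub_one_of_lt
    rw [Int.floor_lt]; push_cast; nlinarith
  · unfold aSeq
    rw [Int.le_floor]; push_cast
    have : (0:ℝ) ≤ n := by positivity
    nlinarith

lemma e_facts (k : ℕ) (hk : 2 ≤ k) (i : ℕ) (hi1 : 1 ≤ i) (hik : i ≤ k - 1) (r : ℕ) :
    (i:ℝ) < k * (((fg k i r).2 : ℝ) * (alphaK k - 1) - (fg k i r).1) ∧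
    ((fg k i r).2 : ℝ) * (alphaK k - 1) - (fg k i r).1 < 1 := by
  obtain ⟨hα, hq⟩ := alpha_facts k hk
  set α := alphaK k
  have hk0 : (0:ℝ) < k := by positivity
  have hi0 : (0:ℝ) < i := by positivity
  have hik' : (i:ℝ) + 1 ≤ k := by
    have : i + 1 ≤ k := by omega
    exact_mod_cast this
  have h1 : (k:ℝ) * (α - 1) < 1 := by nlinarith
  have h1' : 0 < (k:ℝ) * (α - 1) := by apply mul_pos hk0; linarith
  -- λ
  set l : ℝ := 1 - (k:ℝ) * (α - 1) with hl
  induction r with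
  | zero =>
    simp only [fg]; push_cast
    constructor
    · nlinarith
    · nlinarith
  | succ r ih =>
    obtain ⟨ih1, ih2⟩ := ih
    simp only [fg]; push_cast
    set F : ℝ := ((fg k i r).1 : ℝ)
    set G : ℝ := ((fg k i r).2 : ℝ)
    have key : (k * F + (k + 1) * G + i) * (α - 1) - (F + G)
      = l * (G * (α - 1) - F) + i * (α - 1) := by
      rw [hl]; linear_combination G * hq
    have hl0 : 0 < l := by linarith
    have hl1 : i * l + k * (i * (α - 1)) = i := by rw [hl]; ring
    rw [key]
    constructor
    · nlinarith [mul_lt_mul_of_pos_left ih1 hl0]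
    · nlinarith [mul_lt_mul_of_pos_left ih2 hl0]

set_option maxHeartbeats 1000000 in
/-- No move of Type III connects two positions of the form (a_m, b_m). -/
theorem no_typeIII_move_P_to_P (k : ℕ) (hk : 2 ≤ k) (i : ℕ)
    (hi1 : 1 ≤ i) (hik : i ≤ k - 1) (r : ℕ) (hr : 1 ≤ r) (m n : ℕ) :
    ¬ ((aSeq k m - ((fg k i r).1 : ℤ) = aSeq k n ∧
        bSeq k m - (((fg k i r).2 : ℤ) - 1) = bSeq k n) ∨
       (aSeq k m - ((fg k i r).1 : ℤ) = bSeq k n ∧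
        bSeq k m - (((fg k i r).2 : ℤ) - 1) = aSeq k n) ∨
       (aSeq k m - (((fg k i r).2 : ℤ) - 1) = aSeq k n ∧
        bSeq k m - ((fg k i r).1 : ℤ) = bSeq k n) ∨
       (aSeq k m - (((fg k i r).2 : ℤ) - 1) = bSeq k n ∧
        bSeq k m - ((fg k i r).1 : ℤ) = aSeq k n)) := by
  obtain ⟨r, rfl⟩ : ∃ t, r = t + 1 := ⟨r - 1, by omega⟩
  obtain ⟨hα, hq⟩ := alpha_facts k hk
  obtain ⟨he1, he2⟩ := e_facts k hk i hi1 hik r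
  obtain ⟨x, s, hx0, hx1, hxm, hs1, hs2, hbm, hs0, hsk, ham⟩ := seq_facts k hk m
  obtain ⟨y, t, hy0, hy1, hyn, ht1, ht2, hbn, ht0, htk, han⟩ := seq_facts k hk n
  have hmono : m ≤ n → aSeq k m ≤ aSeq k n := by
    intro h
    unfold aSeq
    apply Int.floor_mono
    have : (m:ℝ) ≤ n := by exact_mod_cast h
    nlinarith
  simp only [fg]
  have hFG : (0:ℤ) < (fg k i r).2 := by
    cases r <;> simp only [fg] <;> positivity
  have hF0 : (0:ℤ) ≤ (fg k i r).1 := by positivity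
  have hek : (k:ℝ) * (((fg k i r).2 : ℝ) * (alphaK k - 1) - (fg k i r).1) < k * 1 := by
    apply mul_lt_mul_of_pos_left he2; positivity
  generalize (fg k i r).1 = F at *
  generalize (fg k i r).2 = G at *
  set α := alphaK k
  rw [hbm, hbn]
  generalize aSeq k m = a at *
  generalize aSeq k n = c at *
  have hk0 : (0:ℝ) < k := by positivity
  have hkz : (2:ℤ) ≤ k := by exact_mod_cast hk
  have hiz : (1:ℤ) ≤ i := by exact_mod_cast hi1
  have hikz : (i:ℤ) ≤ k - 1 := by omega
  have hmz : (0:ℤ) ≤ m := by positivity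
  have hnz : (0:ℤ) ≤ n := by positivity
  have hir : (1:ℝ) ≤ i := by exact_mod_cast hi1
  have he0 : 0 < (G:ℝ) * (α - 1) - F := by
    by_contra h
    push Not at h
    nlinarith
  generalize hE : (G:ℝ) * (α - 1) - F = e at *
  push_cast
  rintro (⟨h1, h2⟩ | ⟨h1, h2⟩ | ⟨h1, h2⟩ | ⟨h1, h2⟩)
  · obtain ⟨j, hj⟩ : ∃ j : ℤ, j = s - t + 1 - i := ⟨_, rfl⟩
    have hd : (m:ℤ) - n = G - j := by
      rw [hj]; linear_combination h2 - (k:ℤ) * h1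
    have hd' : (m:ℝ) - n = G - j := by exact_mod_cast hd
    have h1' : (a:ℝ) - (F + G) = c := by exact_mod_cast h1
    have hj' : (j:ℝ) = s - t + 1 - i := by exact_mod_cast hj
    have key : x - y = e - j * α := by
      rw [← hE]; linear_combination hyn - hxm + α * hd' - h1'
    rcases lt_trichotomy j 0 with hj0 | hj0 | hj0
    · have : (j:ℝ) ≤ -1 := by exact_mod_cast (show j ≤ -1 by omega)
      nlinarith
    · have : (j:ℝ) = 0 := by exact_mod_cast hj0
      rw [this] at key hj'
      have : x - y = e := by linarith
      rw [← this, mul_sub] at he1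
      linarith
    · have : (1:ℝ) ≤ j := by exact_mod_cast (show 1 ≤ j by omega)
      have hja : α ≤ j * α := le_mul_of_one_le_left (by linarith) this
      have hxy : x < y := by linarith
      have : (1:ℝ) ≤ s - t := by linarith
      have := mul_lt_mul_of_pos_left hxy hk0
      linarith
  · have h1' : (a:ℝ) - (F + G) = k * c + n + t := by exact_mod_cast h1
    have h2' : (k:ℝ) * a + m + s - (k * F + (k+1) * G + i - 1) = c := by exact_mod_cast h2
    obtain ⟨b, hb⟩ : ∃ b : ℤ, b = k * c + n + t := ⟨_, rfl⟩
    have hb' : (b:ℝ) = k * c + n + t := by exact_mod_cast hb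
    have key : e = b * (1 + k * α) - c * α + x + (s - i + 1) * α := by
      rw [← hE, hb']; linear_combination hxm + (1 + k * α) * h1' - α * h2'
    have hs0' : (0:ℝ) ≤ s := by exact_mod_cast hs0
    have hikr : (i:ℝ) ≤ k - 1 := by exact_mod_cast hikz
    rcases Nat.eq_zero_or_pos n with hn | hn
    · subst hn
      have hc : c = 0 := by
        have h : (c:ℝ) ≤ 0 := by push_cast at hyn; linarith
        have : c ≤ 0 := by exact_mod_cast h
        push_cast at han; omega
      have hy : y = 0 := by rw [hc] at hyn; push_cast at hyn; linarith
      have ht : t = 0 := by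
        rw [hy] at ht1
        have h : (t:ℝ) ≤ 0 := by linarith
        have : t ≤ 0 := by exact_mod_cast h
        omega
      have hbz : b = 0 := by rw [hb, hc, ht]; simp
      rw [hbz, hc] at key
      push_cast at key
      obtain ⟨j, hj⟩ : ∃ j : ℤ, j = s - i + 1 := ⟨_, rfl⟩
      have hj' : (j:ℝ) = s - i + 1 := by exact_mod_cast hj
      rw [← hj'] at key
      rcases lt_trichotomy j 0 with hj0 | hj0 | hj0
      · have : (j:ℝ) ≤ -1 := by exact_mod_cast (show j ≤ -1 by omega)
        nlinarith
      · have : (j:ℝ) = 0 := by exact_mod_cast hj0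
        rw [this] at key hj'
        have : x = e := by linarith
        rw [← this] at he1
        linarith
      · have : (1:ℝ) ≤ j := by exact_mod_cast (show 1 ≤ j by omega)
        nlinarith
    · have hn1 : (1:ℤ) ≤ n := by exact_mod_cast hn
      have hbc : c ≤ b := by nlinarith
      have hb1 : 1 ≤ b := by linarith
      have hbc' : (c:ℝ) ≤ b := by exact_mod_cast hbc
      have hb1' : (1:ℝ) ≤ b := by exact_mod_cast hb1
      have hkr : (2:ℝ) ≤ k := by exact_mod_cast hk
      have e1 : (b:ℝ) * (1 + k * α) - c * α ≥ b * (1 + (k - 1) * α) := by nlinarith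
      have e2 : (b:ℝ) * (1 + (k - 1) * α) ≥ 1 + (k - 1) * α := by
        have : 0 ≤ 1 + ((k:ℝ) - 1) * α := by nlinarith
        nlinarith
      have e3 : ((s:ℝ) - i + 1) * α ≥ (2 - k) * α := by
        apply mul_le_mul_of_nonneg_right <;> linarith
      nlinarith
  · have hGF : 0 < k * (F:ℤ) + (k+1) * G + i - 1 - (F + G) := by nlinarith
    have hmn : n ≤ m := by
      by_contra h
      have := hmono (by omega)
      linarith
    have hmn' : (n:ℤ) ≤ m := by exact_mod_cast hmn
    nlinarith
  · have hGF : 0 < k * (F:ℤ) + (k+1) * G + i - 1 - (F + G) := by nlinarith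
    nlinarith
end

section
/- Let k ≥ 1 be an integer, α = (1+√(1+4/k))/2, β = kα+1, a_n = ⌊nα⌋, b_n = ⌊nβ⌋, c_n = a_n − a_{n−1}, d_n = b_n − b_{n−1}. Then for all n ≥ 1, c_n = 2 if and only if d_n = k+2 and b_n ≡ n (mod k). -/
/-- c_n = a_n − a_{n−1} (used for n ≥ 1) -/
noncomputable def cSeq (k n : ℕ) : ℤ := aSeq k n - aSeq k (n - 1)

/-- d_n = b_n − b_{n−1} (used for n ≥ 1) -/
noncomputable def dSeq (k n : ℕ) : ℤ := bSeq k n - bSeq k (n - 1)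

theorem alpha_props (k : ℕ) (hk : 1 ≤ k) :
    0 < alphaK k - 1 ∧ (k : ℝ) * (alphaK k - 1) < 1 := by
  have hk' : (1 : ℝ) ≤ k := by exact_mod_cast hk
  have h0 : (0 : ℝ) < 4 / (k : ℝ) := by positivity
  have hs := Real.sq_sqrt (show (0 : ℝ) ≤ 1 + 4 / (k : ℝ) by positivity)
  have hn := Real.sqrt_nonneg (1 + 4 / (k : ℝ))
  have hmul : (k : ℝ) * (4 / (k : ℝ)) = 4 := by field_simp
  unfold alphaK
  set s := Real.sqrt (1 + 4 / (k : ℝ))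
  have h1 : 1 < s := by nlinarith
  refine ⟨by linarith, ?_⟩
  have h2 : (k : ℝ) * ((s - 1) * (s + 1)) = 4 := by
    rw [← hmul]; congr 1; linarith
  have h3 : 0 < (k : ℝ) * (s - 1) := by
    apply mul_pos <;> linarith
  nlinarith

theorem key_s9 (k : ℕ) (hk : 1 ≤ k) (x y e : ℝ) (hxy : x = y + 1 + e) (he : 0 < e)
    (hke : (k : ℝ) * e < 1) :
    ⌊x⌋ - ⌊y⌋ = 2 ↔ (⌊(k : ℝ) * x⌋ - ⌊(k : ℝ) * y⌋ = (k : ℤ) + 1 ∧ (k : ℤ) ∣ ⌊(k : ℝ) * x⌋) := by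
  have hk' : (1 : ℝ) ≤ k := by exact_mod_cast hk
  have hk0 : (0 : ℝ) < k := by linarith
  have he1 : e < 1 := by nlinarith
  constructor
  · intro h
    have hA : (⌊x⌋ : ℝ) = ⌊y⌋ + 2 := by
      have : ⌊x⌋ = ⌊y⌋ + 2 := by omega
      rw [this]; push_cast; ring
    have h1 := Int.floor_le x
    have h2 := Int.lt_floor_add_one y
    have h1k := mul_le_mul_of_nonneg_left h1 hk0.le
    have h2k := mul_lt_mul_of_pos_left h2 hk0
    have hkx : (k : ℝ) * x = k * y + k + k * e := by rw [hxy]; ring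
    rw [hA] at h1k
    have hB : ⌊(k : ℝ) * x⌋ = k * (⌊y⌋ + 2) := by
      rw [Int.floor_eq_iff]; push_cast
      constructor <;> linarith
    have hB' : ⌊(k : ℝ) * y⌋ = k * (⌊y⌋ + 1) - 1 := by
      rw [Int.floor_eq_iff]; push_cast
      constructor <;> linarith
    rw [hB, hB']
    exact ⟨by ring, dvd_mul_right _ _⟩
  · rintro ⟨h, m, hm⟩
    have hB' : ⌊(k : ℝ) * y⌋ = k * m - k - 1 := by omega
    rw [Int.floor_eq_iff] at hm hB'
    push_cast at hm hB'
    have x1 : (m : ℝ) ≤ x := le_of_mul_le_mul_left hm.1 hk0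
    have x2 : x < m + 1 := lt_of_mul_lt_mul_left (by linarith [hm.2]) hk0.le
    have y1 : y < m - 1 := lt_of_mul_lt_mul_left (by linarith [hB'.2]) hk0.le
    have hA : ⌊x⌋ = m := Int.floor_eq_iff.2 ⟨x1, x2⟩
    have hA' : ⌊y⌋ = m - 2 := by
      rw [Int.floor_eq_iff]; push_cast
      constructor <;> linarith
    omega

/-- c_n = 2 iff d_n = k+2 and b_n ≡ n (mod k). -/
theorem c_eq_two_iff (k : ℕ) (hk : 1 ≤ k) (n : ℕ) (hn : 1 ≤ n) :
    cSeq k n = 2 ↔ (dSeq k n = (k : ℤ) + 2 ∧ bSeq k n ≡ (n : ℤ) [ZMOD (k : ℤ)]) := by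
  obtain ⟨he, hke⟩ := alpha_props k hk
  have hb : ∀ m : ℕ, bSeq k m = ⌊(k : ℝ) * ((m : ℝ) * alphaK k)⌋ + m := by
    intro m
    unfold bSeq betaK
    rw [← Int.floor_add_natCast]
    congr 1; ring
  have H := key_s9 k hk (n * alphaK k) ((n - 1 : ℕ) * alphaK k) (alphaK k - 1)
    (by push_cast [hn]; ring) he hke
  unfold cSeq dSeq
  rw [hb, hb]
  unfold aSeq
  rw [H]
  apply and_congr
  · omega
  · rw [Int.modEq_comm, Int.modEq_iff_dvd, add_sub_cancel_right]
end

section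
/- Let k ≥ 2 be an integer, α = (1+√(1+4/k))/2, β = kα+1, a_n = ⌊nα⌋, b_n = ⌊nβ⌋, c_n = a_n − a_{n−1}, d_n = b_n − b_{n−1}. Fix i ∈ {1,…,k−1}. Then for all n ≥ 0, the number of indices j with 1 ≤ j ≤ g^i_n and c_j = 2 equals f^i_n; and for all n ≥ 1, the number of indices j with 1 ≤ j ≤ g^i_n and d_j = k+1 equals g^i_{n−1}. -/
lemma count_aux (x : ℝ) (m : ℤ) (h1 : (m : ℝ) < x) (h2 : x < m + 1) (N : ℕ) :
    ((((Finset.Icc 1 N).filter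
      (fun j : ℕ => ⌊(j : ℝ) * x⌋ - ⌊((j - 1 : ℕ) : ℝ) * x⌋ = m + 1)).card : ℕ) : ℤ)
        = ⌊(N : ℝ) * x⌋ - m * N ∧
    ((((Finset.Icc 1 N).filter
      (fun j : ℕ => ⌊(j : ℝ) * x⌋ - ⌊((j - 1 : ℕ) : ℝ) * x⌋ = m)).card : ℕ) : ℤ)
        = (m + 1) * N - ⌊(N : ℝ) * x⌋ := by
  induction N with
  | zero => simp
  | succ N ih =>
    have hd : ⌊((N + 1 : ℕ) : ℝ) * x⌋ = ⌊(N : ℝ) * x⌋ + m ∨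
        ⌊((N + 1 : ℕ) : ℝ) * x⌋ = ⌊(N : ℝ) * x⌋ + m + 1 := by
      have e1 := Int.floor_le ((N : ℝ) * x)
      have e2 := Int.lt_floor_add_one ((N : ℝ) * x)
      have l1 : ⌊(N : ℝ) * x⌋ + m ≤ ⌊((N + 1 : ℕ) : ℝ) * x⌋ := by
        rw [Int.le_floor]; push_cast; linarith
      have l2 : ⌊((N + 1 : ℕ) : ℝ) * x⌋ < ⌊(N : ℝ) * x⌋ + m + 2 := by
        rw [Int.floor_lt]; push_cast; linarith
      omega
    rw [← Finset.insert_Icc_right_eq_Icc_add_one (by omega : 1 ≤ N + 1)]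
    have hn : N + 1 ∉ Finset.Icc 1 N := by simp
    obtain ⟨i1, i2⟩ := ih
    rw [Finset.filter_insert, Finset.filter_insert]
    have hs : N + 1 - 1 = N := rfl
    rw [hs]
    rcases hd with hd | hd
    · rw [if_neg (by rw [hd]; omega), if_pos (by rw [hd]; omega),
        Finset.card_insert_of_notMem (by simp), hd]
      push_cast
      constructor <;> linarith
    · rw [if_pos (by rw [hd]; omega), if_neg (by rw [hd]; omega),
        Finset.card_insert_of_notMem (by simp), hd]
      push_cast
      constructor <;> linarith

lemma alpha_eq (k : ℕ) (hk : 2 ≤ k) :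
    (k : ℝ) * (alphaK k - 1) * alphaK k = 1 ∧ 1 < alphaK k := by
  have hk0 : (0 : ℝ) < k := by exact_mod_cast (by omega : 0 < k)
  have hp : (0 : ℝ) < 4 / (k : ℝ) := by positivity
  have hs := Real.sq_sqrt (by linarith : (0 : ℝ) ≤ 1 + 4 / (k : ℝ))
  have h1 : 1 < Real.sqrt (1 + 4 / (k : ℝ)) := by
    rw [Real.lt_sqrt (by norm_num)]; linarith
  have h4 : (k : ℝ) * (4 / k) = 4 := by field_simp
  unfold alphaK
  constructor
  · linear_combination (k : ℝ) / 4 * hs + h4 / 4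
  · linarith

lemma inv_aux (k : ℕ) (i : ℕ) (t : ℝ) (ht : 0 < t) (hk0 : (2 : ℝ) ≤ k)
    (h : (k : ℝ) * t * (t + 1) = 1) (hi : (i : ℝ) + 1 ≤ k) (n : ℕ) :
    (i : ℝ) ≤ k * ((fg k i n).2 * t - (fg k i n).1) ∧
      (k : ℝ) * ((fg k i n).2 * t - (fg k i n).1) < k := by
  have hkt : 0 < (k : ℝ) * t := by positivity
  have hkt1 : (k : ℝ) * t < 1 := by nlinarith
  have hi0 : (0 : ℝ) ≤ i := Nat.cast_nonneg i
  induction n with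
  | zero =>
    simp only [fg]
    push_cast
    constructor
    · have : (i : ℝ) * t ≤ 1 := by nlinarith
      nlinarith [mul_nonneg hkt.le (sub_nonneg.2 this)]
    · nlinarith
  | succ n ih =>
    obtain ⟨h1, h2⟩ := ih
    simp only [fg]
    push_cast
    set f : ℝ := ((fg k i n).1 : ℝ)
    set g : ℝ := ((fg k i n).2 : ℝ)
    have e : (k : ℝ) * ((k * f + (k + 1) * g + i) * t - (f + g))
        = (1 - k * t) * (k * (g * t - f)) + k * t * i := by
      linear_combination (k : ℝ) * g * h
    rw [e]
    constructor
    · nlinarith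
    · nlinarith

/-- In the prefix of length g^i_n there are exactly f^i_n indices j with
    c_j = 2 (n ≥ 0), and, for n ≥ 1, exactly g^i_{n−1} indices j with
    d_j = k+1. -/
theorem prefix_counts (k : ℕ) (hk : 2 ≤ k) (i : ℕ) (hi1 : 1 ≤ i) (hik : i ≤ k - 1) :
    (∀ n : ℕ,
      ((Finset.Icc 1 (fg k i n).2).filter (fun j => cSeq k j = 2)).card
        = (fg k i n).1) ∧
    (∀ n : ℕ, 1 ≤ n →
      ((Finset.Icc 1 (fg k i n).2).filter (fun j => dSeq k j = (k : ℤ) + 1)).card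
        = (fg k i (n - 1)).2) := by
  obtain ⟨ha, ha1⟩ := alpha_eq k hk
  obtain ⟨t, ht⟩ : ∃ t, alphaK k = t + 1 := ⟨alphaK k - 1, by ring⟩
  have hk0 : (2 : ℝ) ≤ k := by exact_mod_cast hk
  have hi : (i : ℝ) + 1 ≤ k := by exact_mod_cast (by omega : i + 1 ≤ k)
  have hi0 : (0 : ℝ) ≤ i := Nat.cast_nonneg i
  have ht0 : 0 < t := by linarith
  have h : (k : ℝ) * t * (t + 1) = 1 := by rw [ht] at ha; linear_combination ha
  have hkt : 0 < (k : ℝ) * t := by positivity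
  have hkt1 : (k : ℝ) * t < 1 := by nlinarith
  have hb : betaK k = k + 1 + k * t := by unfold betaK; rw [ht]; ring
  constructor
  · intro n
    obtain ⟨h1, h2⟩ := inv_aux k i t ht0 hk0 h hi n
    have hc := (count_aux (alphaK k) 1 (by simpa using ha1)
      (by rw [ht]; push_cast; nlinarith) (fg k i n).2).1
    have hf : ⌊((fg k i n).2 : ℝ) * alphaK k⌋ = ((fg k i n).2 : ℤ) + (fg k i n).1 := by
      rw [Int.floor_eq_iff, ht]
      push_cast
      constructor
      · have : 0 ≤ ((fg k i n).2 : ℝ) * t - (fg k i n).1 := by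
          by_contra hh
          push Not at hh
          nlinarith
        linarith
      · have : ((fg k i n).2 : ℝ) * t - (fg k i n).1 < 1 := by
          by_contra hh
          push Not at hh
          nlinarith
        linarith
    rw [hf] at hc
    unfold cSeq aSeq
    norm_num at hc
    norm_num
    exact_mod_cast hc
  · intro n hn
    obtain ⟨n, rfl⟩ : ∃ m, n = m + 1 := ⟨n - 1, by omega⟩
    obtain ⟨h1, h2⟩ := inv_aux k i t ht0 hk0 h hi n
    have hc := (count_aux (betaK k) (k + 1) (by rw [hb]; push_cast; linarith)
      (by rw [hb]; push_cast; linarith) (fg k i (n + 1)).2).2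
    have hf : ⌊((fg k i (n + 1)).2 : ℝ) * betaK k⌋
        = ((k : ℤ) + 2) * (fg k i (n + 1)).2 - (fg k i n).2 := by
      rw [Int.floor_eq_iff, hb]
      simp only [fg]
      push_cast
      set f : ℝ := ((fg k i n).1 : ℝ)
      set g : ℝ := ((fg k i n).2 : ℝ)
      have e : (k * f + (k + 1) * g + i) * ((k : ℝ) + 1 + k * t)
          - ((k + 2) * (k * f + (k + 1) * g + i) - g)
          = (k * (g * t - f) - i) * (1 - k * t) := by
        linear_combination (k : ℝ) * g * h
      have p1 : 0 ≤ (k * (g * t - f) - i) * (1 - k * t) :=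
        mul_nonneg (by linarith) (by linarith)
      have e2 : (1 - (k : ℝ) * t) * (k + 1 + k * t) = 1 := by
        linear_combination (-(k : ℝ)) * h
      have p2 : (k * (g * t - f) - i) * (1 - k * t) < 1 := by nlinarith
      constructor <;> linarith
    rw [hf] at hc
    unfold dSeq bSeq
    have : n + 1 - 1 = n := rfl
    rw [this]
    zify
    rw [hc]
    ring
end

section
/- Let k ≥ 2 be an integer, α = (1+√(1+4/k))/2, β = kα+1, b_n = ⌊nβ⌋, d_n = b_n − b_{n−1}. Fix i ∈ {1,…,k−1}. Then for all integers m ≥ 0 and n ≥ 1, the number of indices j with m < j ≤ m + g^i_n and d_j = k+1 equals either g^i_{n−1} or g^i_{n−1} − 1; no other value occurs. -/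
theorem theta_spec (k : ℕ) (hk : 2 ≤ k) : ∃ t : ℝ, betaK k = k + 1 + t ∧ 0 < t ∧ t < 1 ∧
    t * t + k * t = k := by
  have hk' : (2 : ℝ) ≤ k := by exact_mod_cast hk
  have hs : Real.sqrt (1 + 4 / (k : ℝ)) ^ 2 = 1 + 4 / (k : ℝ) := Real.sq_sqrt (by positivity)
  have hs1 : 1 < Real.sqrt (1 + 4 / (k : ℝ)) := by
    rw [Real.lt_sqrt (by norm_num)]
    have : 0 < 4 / (k : ℝ) := by positivity
    linarith
  have hd : (k : ℝ) * (4 / (k : ℝ)) = 4 := by field_simp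
  unfold betaK alphaK
  set s := Real.sqrt (1 + 4 / (k : ℝ))
  have hks : (k : ℝ) * s ^ 2 = k + 4 := by rw [hs]; linarith
  have ht : (k * ((s - 1) / 2)) * (k * ((s - 1) / 2)) + k * (k * ((s - 1) / 2)) = (k : ℝ) := by
    linear_combination (k : ℝ) / 4 * hks
  have h0 : 0 < (k : ℝ) * ((s - 1) / 2) := by
    apply mul_pos <;> linarith
  refine ⟨k * ((s - 1) / 2), by ring, h0, ?_, ht⟩
  by_contra h
  push Not at h
  nlinarith

theorem dSeq_cases (k : ℕ) (t : ℝ) (hb : betaK k = k + 1 + t) (h0 : 0 < t) (h1 : t < 1) (j : ℕ) :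
    bSeq k (j + 1) - bSeq k j = k + 1 ∨ bSeq k (j + 1) - bSeq k j = k + 2 := by
  unfold bSeq
  rw [hb]
  have a1 := Int.floor_le (((j + 1 : ℕ) : ℝ) * (k + 1 + t))
  have a2 := Int.lt_floor_add_one (((j + 1 : ℕ) : ℝ) * (k + 1 + t))
  have b1 := Int.floor_le ((j : ℝ) * (k + 1 + t))
  have b2 := Int.lt_floor_add_one ((j : ℝ) * (k + 1 + t))
  set x := ⌊((j + 1 : ℕ) : ℝ) * (k + 1 + t)⌋
  set y := ⌊(j : ℝ) * (k + 1 + t)⌋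
  push_cast at a1 a2
  have e1 : x - y < (k : ℤ) + 3 := by
    have : (x : ℝ) - y < k + 3 := by linarith
    exact_mod_cast this
  have e2 : (k : ℤ) < x - y := by
    have : (k : ℝ) < (x : ℝ) - y := by linarith
    exact_mod_cast this
  omega

theorem count_eq (k : ℕ) (t : ℝ) (hb : betaK k = k + 1 + t) (h0 : 0 < t) (h1 : t < 1) (m G : ℕ) :
    (((Finset.Ioc m (m + G)).filter (fun j => dSeq k j = (k : ℤ) + 1)).card : ℤ)
      = (k + 2) * G - (bSeq k (m + G) - bSeq k m) := by
  induction G with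
  | zero => simp
  | succ G ih =>
    have hI : Finset.Ioc m (m + (G + 1)) = insert (m + G + 1) (Finset.Ioc m (m + G)) := by
      ext x; simp only [Finset.mem_Ioc, Finset.mem_insert]; omega
    rw [hI, Finset.filter_insert]
    have hd : dSeq k (m + G + 1) = bSeq k (m + G + 1) - bSeq k (m + G) := rfl
    have hm : m + (G + 1) = m + G + 1 := rfl
    rw [hm]
    rcases dSeq_cases k t hb h0 h1 (m + G) with h | h
    · rw [if_pos (by rw [hd, h]), Finset.card_insert_of_notMem (by simp)]
      push_cast
      rw [ih]
      linear_combination h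
    · rw [if_neg (by rw [hd, h]; omega), ih]
      push_cast
      linear_combination h

theorem fg_bound (k i : ℕ) (hik : i + 1 ≤ k) (t : ℝ) (h0 : 0 < t) (h1 : t < 1)
    (ht : t * t + k * t = k) (n : ℕ) :
    (i : ℝ) ≤ t * (fg k i n).2 - k * (fg k i n).1 ∧
      t * (fg k i n).2 - k * (fg k i n).1 ≤ (i : ℝ) + 1 := by
  induction n with
  | zero =>
    have hik' : (i : ℝ) + 1 ≤ k := by exact_mod_cast hik
    have hi : (0 : ℝ) ≤ i := by positivity
    simp only [fg]
    push_cast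
    constructor
    · have : (1 - t) * ((i : ℝ) + 1) ≤ (1 - t) * (k + 1 + t) :=
        mul_le_mul_of_nonneg_left (by linarith) (by linarith)
      linarith
    · nlinarith
  | succ n ih =>
    obtain ⟨ih1, ih2⟩ := ih
    simp only [fg]
    push_cast
    set f : ℝ := ((fg k i n).1 : ℝ)
    set g : ℝ := ((fg k i n).2 : ℝ)
    have e : t * (k * f + (k + 1) * g + i) - k * (f + g) = t * i + (1 - t) * (t * g - k * f) := by
      linear_combination g * ht
    rw [e]
    constructor
    · have := mul_le_mul_of_nonneg_left ih1 (by linarith : 0 ≤ 1 - t)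
      linarith
    · have := mul_le_mul_of_nonneg_left ih2 (by linarith : 0 ≤ 1 - t)
      linarith

/-- Any factor of length g^i_n contains either g^i_{n−1} or g^i_{n−1} − 1
    indices j with d_j = k+1; no other value occurs. -/
theorem factor_sigma_count (k : ℕ) (hk : 2 ≤ k) (i : ℕ) (hi1 : 1 ≤ i)
    (hik : i ≤ k - 1) (m n : ℕ) (hn : 1 ≤ n) :
    ((Finset.Ioc m (m + (fg k i n).2)).filter
        (fun j => dSeq k j = (k : ℤ) + 1)).card = (fg k i (n - 1)).2 ∨
    ((Finset.Ioc m (m + (fg k i n).2)).filter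
        (fun j => dSeq k j = (k : ℤ) + 1)).card = (fg k i (n - 1)).2 - 1 := by
  obtain ⟨t, hb, h0, h1, ht⟩ := theta_spec k hk
  obtain ⟨n, rfl⟩ : ∃ p, n = p + 1 := ⟨n - 1, by omega⟩
  have hc := count_eq k t hb h0 h1 m (fg k i (n + 1)).2
  obtain ⟨u1, u2⟩ := fg_bound k i (by omega) t h0 h1 ht n
  have hG : ((fg k i (n + 1)).2 : ℝ)
      = k * ((fg k i n).1 : ℝ) + (k + 1) * ((fg k i n).2 : ℝ) + i := by
    simp only [fg]; push_cast; ring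
  rw [Nat.add_sub_cancel]
  generalize ((Finset.Ioc m (m + (fg k i (n + 1)).2)).filter
        (fun j => dSeq k j = (k : ℤ) + 1)).card = C at *
  generalize (fg k i (n + 1)).2 = G at *
  generalize (fg k i n).1 = f at *
  generalize (fg k i n).2 = g at *
  unfold bSeq at hc
  rw [hb] at hc
  have a1 := Int.floor_le (((m + G : ℕ) : ℝ) * (k + 1 + t))
  have a2 := Int.lt_floor_add_one (((m + G : ℕ) : ℝ) * (k + 1 + t))
  have b1 := Int.floor_le ((m : ℝ) * (k + 1 + t))
  have b2 := Int.lt_floor_add_one ((m : ℝ) * (k + 1 + t))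
  generalize ⌊((m + G : ℕ) : ℝ) * (k + 1 + t)⌋ = x at *
  generalize ⌊(m : ℝ) * (k + 1 + t)⌋ = y at *
  have hc' : (C : ℝ) = (k + 2) * G - (x - y) := by exact_mod_cast hc
  push_cast at a1 a2
  have p1 : (C : ℝ) < (1 - t) * G + 1 := by linarith
  have p2 : (1 - t) * G - 1 < (C : ℝ) := by linarith
  have key : (1 - t) * (G : ℝ) = g - (1 - t) * (t * g - k * f - i) := by
    rw [hG]; linear_combination (-(g : ℝ)) * ht
  have q1 : 0 ≤ (1 - t) * (t * g - k * f - i) := mul_nonneg (by linarith) (by linarith)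
  have q2 : (1 - t) * (t * g - k * f - i) < 1 := by nlinarith
  have r1 : C < g + 1 := by
    have : (C : ℝ) < g + 1 := by linarith
    exact_mod_cast this
  have r2 : g < C + 2 := by
    have : (g : ℝ) < C + 2 := by linarith
    exact_mod_cast this
  omega
end

section
/- Let k ≥ 2 be an integer, α = (1+√(1+4/k))/2 and β = kα+1. Fix i ∈ {1,…,k−1}. Then for all n ≥ 1, f^i_n = ⌊g^i_{n−1}·α⌋ and g^i_n = ⌊g^i_{n−1}·β⌋. In particular each pair (f^i_n, g^i_n) with n ≥ 1 is of the form (⌊mα⌋, ⌊mβ⌋) for some m ∈ ℕ (namely m = g^i_{n−1}), i.e., it is a P-position. -/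
theorem fg_alpha_aux (k : ℕ) (hk : 2 ≤ k) :
    0 < alphaK k - 1 ∧ (k : ℝ) * (alphaK k - 1) ^ 2 = 1 - k * (alphaK k - 1) := by
  have hK : (0 : ℝ) < k := by exact_mod_cast (by omega : 0 < k)
  have h4 : (0 : ℝ) < 4 / (k : ℝ) := by positivity
  have hs : Real.sqrt (1 + 4 / (k : ℝ)) ^ 2 = 1 + 4 / (k : ℝ) := Real.sq_sqrt (by linarith)
  have h1 : 1 < Real.sqrt (1 + 4 / (k : ℝ)) := by
    rw [Real.lt_sqrt (by norm_num)]; linarith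
  have hk4 : (k : ℝ) * (4 / (k : ℝ)) = 4 := by field_simp
  unfold alphaK
  refine ⟨by linarith, ?_⟩
  linear_combination (k : ℝ) / 4 * hs + hk4 / 4

theorem fg_inv_aux (k : ℕ) (hk : 2 ≤ k) (i : ℕ) (hik : i ≤ k - 1) (n : ℕ) :
    0 ≤ (k : ℝ) * ((fg k i n).2 * (alphaK k - 1) - (fg k i n).1) - i ∧
    (k : ℝ) * ((fg k i n).2 * (alphaK k - 1) - (fg k i n).1) - i < 1 := by
  obtain ⟨hc, h⟩ := fg_alpha_aux k hk
  generalize alphaK k - 1 = c at *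
  have hK : (0 : ℝ) < k := by exact_mod_cast (by omega : 0 < k)
  have hi : (i : ℝ) + 1 ≤ k := by exact_mod_cast (by omega : i + 1 ≤ k)
  have hi0 : (0 : ℝ) ≤ i := by positivity
  have hkc : 0 < (k : ℝ) * c := by positivity
  have hkc2 : 0 < (k : ℝ) * c ^ 2 := by positivity
  induction n with
  | zero =>
    simp only [fg]
    push_cast
    have h2 : ((i : ℝ) + 1) * c ≤ k * c := by gcongr
    constructor
    · have : (k : ℝ) * ((i + 1) * c - 0) - i = k * c * (1 - i * c) := by
        linear_combination (i : ℝ) * h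
      norm_num at this ⊢
      nlinarith
    · norm_num
      nlinarith
  | succ n ih =>
    have e : (k : ℝ) * ((fg k i (n+1)).2 * c - (fg k i (n+1)).1) - i
        = (1 - k * c) * ((k : ℝ) * ((fg k i n).2 * c - (fg k i n).1) - i) := by
      simp only [fg]
      push_cast
      linear_combination (k : ℝ) * (fg k i n).2 * h
    rw [e]
    obtain ⟨a, b⟩ := ih
    constructor
    · exact mul_nonneg (by linarith) a
    · nlinarith

/-- For n ≥ 1, f^i_n = ⌊g^i_{n−1}·α⌋ and g^i_n = ⌊g^i_{n−1}·β⌋;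
    in particular (f^i_n, g^i_n) is a P-position. -/
theorem fg_is_Pposition (k : ℕ) (hk : 2 ≤ k) (i : ℕ) (hi1 : 1 ≤ i)
    (hik : i ≤ k - 1) (n : ℕ) (hn : 1 ≤ n) :
    ((fg k i n).1 : ℤ) = aSeq k (fg k i (n - 1)).2 ∧
    ((fg k i n).2 : ℤ) = bSeq k (fg k i (n - 1)).2 := by
  obtain ⟨m, rfl⟩ : ∃ m, n = m + 1 := ⟨n - 1, by omega⟩
  obtain ⟨h1, h2⟩ := fg_inv_aux k hk i hik m
  have hK : (0 : ℝ) < k := by exact_mod_cast (by omega : 0 < k)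
  have hi : (i : ℝ) + 1 ≤ k := by exact_mod_cast (by omega : i + 1 ≤ k)
  have hi0 : (0 : ℝ) ≤ i := by positivity
  simp only [Nat.add_sub_cancel, aSeq, bSeq, betaK]
  constructor
  · symm
    rw [Int.floor_eq_iff]
    simp only [fg]
    push_cast
    constructor
    · by_contra! hh
      nlinarith
    · by_contra! hh
      nlinarith
  · symm
    rw [Int.floor_eq_iff]
    simp only [fg]
    push_cast
    constructor <;> nlinarith
end

section
/- Let k ≥ 2 be an integer, α = (1+√(1+4/k))/2, β = kα+1, b_n = ⌊nβ⌋, d_n = b_n − b_{n−1}. Fix i ∈ {1,…,k−1} and n ≥ 0. Suppose m ≥ 0 satisfies m + g^i_{n+1} < g^i_{n+2} (so the block of positions (m, m+g^i_{n+1}] is a factor of the prefix of length g^i_{n+2} which is not its suffix), and the position p = m + g^i_{n+1} satisfies d_p = k+2 and #{j : 1 ≤ j ≤ p, d_j = k+2} ≡ i (mod k) (i.e., the block ends with the letter τ_i). Then the number of indices j with m < j ≤ m + g^i_{n+1} and d_j = k+1 equals exactly g^i_n. -/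
noncomputable def thK (k : ℕ) : ℝ := (k : ℝ) * alphaK k - k

lemma thK_quad (k : ℕ) (hk : 2 ≤ k) : thK k ^ 2 + k * thK k = k := by
  have hk0 : (0:ℝ) < k := by positivity
  have h := Real.sq_sqrt (show (0:ℝ) ≤ 1 + 4 / (k:ℝ) by positivity)
  unfold thK alphaK
  generalize Real.sqrt (1 + 4 / (k:ℝ)) = s at *
  have h2 : (k:ℝ) * s ^ 2 = k + 4 := by rw [h]; field_simp
  linear_combination (k:ℝ) / 4 * h2

lemma thK_pos (k : ℕ) (hk : 2 ≤ k) : 0 < thK k := by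
  have hk0 : (0:ℝ) < k := by positivity
  have : (1:ℝ) < Real.sqrt (1 + 4 / (k:ℝ)) := by
    apply Real.lt_sqrt_of_sq_lt
    have : (0:ℝ) < 4 / k := by positivity
    linarith
  unfold thK alphaK
  nlinarith

lemma thK_lt (k : ℕ) (hk : 2 ≤ k) : thK k < 1 := by
  have hk0 : (0:ℝ) < k := by positivity
  have h1 := thK_quad k hk
  have h2 := thK_pos k hk
  by_contra h
  push Not at h
  nlinarith

noncomputable def tK (k j : ℕ) : ℤ := ⌊(j : ℝ) * thK k⌋

lemma bSeq_eq (k j : ℕ) : bSeq k j = j * (k + 1) + tK k j := by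
  unfold bSeq tK betaK thK
  rw [show (j:ℝ) * (k * alphaK k + 1) = ((j * (k+1) : ℤ) : ℝ) + j * (k * alphaK k - k) by
    push_cast; ring]
  rw [Int.floor_intCast_add]

lemma dSeq_succ (k j : ℕ) : dSeq k (j+1) = k + 1 + (tK k (j+1) - tK k j) := by
  unfold dSeq
  rw [bSeq_eq, Nat.add_sub_cancel, bSeq_eq]
  push_cast; ring

lemma tK_step (k : ℕ) (hk : 2 ≤ k) (j : ℕ) :
    tK k (j+1) = tK k j ∨ tK k (j+1) = tK k j + 1 := by
  have h0 := thK_pos k hk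
  have h1 := thK_lt k hk
  have a1 := Int.floor_le ((j : ℝ) * thK k)
  have a2 := Int.lt_floor_add_one ((j : ℝ) * thK k)
  have b1 := Int.floor_le (((j+1:ℕ) : ℝ) * thK k)
  have b2 := Int.lt_floor_add_one (((j+1:ℕ) : ℝ) * thK k)
  change ((tK k j : ℤ) : ℝ) ≤ _ at a1
  change _ < ((tK k j : ℤ) : ℝ) + 1 at a2
  change ((tK k (j+1) : ℤ) : ℝ) ≤ _ at b1
  change _ < ((tK k (j+1) : ℤ) : ℝ) + 1 at b2
  push_cast at b1 b2
  have c1 : tK k j < tK k (j+1) + 1 := by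
    have : ((tK k j : ℤ) : ℝ) < ((tK k (j+1) + 1 : ℤ) : ℝ) := by push_cast; linarith
    exact_mod_cast this
  have c2 : tK k (j+1) < tK k j + 2 := by
    have : ((tK k (j+1) : ℤ) : ℝ) < ((tK k j + 2 : ℤ) : ℝ) := by push_cast; linarith
    exact_mod_cast this
  omega

lemma tau_count (k : ℕ) (hk : 2 ≤ k) (p : ℕ) :
    (((Finset.Icc 1 p).filter (fun j => dSeq k j = (k : ℤ) + 2)).card : ℤ) = tK k p := by
  induction p with
  | zero => simp [tK]
  | succ p ih =>
    rw [← Finset.insert_Icc_right_eq_Icc_add_one (by omega), Finset.filter_insert, dSeq_succ]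
    rcases tK_step k hk p with h | h
    · rw [if_neg (by omega), ih, h]
    · rw [if_pos (by omega), Finset.card_insert_of_notMem (by simp)]
      push_cast
      rw [ih, h]

lemma sigma_count (k : ℕ) (hk : 2 ≤ k) (m L : ℕ) :
    (((Finset.Ioc m (m+L)).filter (fun j => dSeq k j = (k : ℤ) + 1)).card : ℤ)
      = L - (tK k (m+L) - tK k m) := by
  induction L with
  | zero => simp
  | succ L ih =>
    rw [← add_assoc, ← Finset.insert_Ioc_right_eq_Ioc_add_one (by omega),
      Finset.filter_insert, dSeq_succ]
    rcases tK_step k hk (m+L) with h | h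
    · rw [if_pos (by omega), Finset.card_insert_of_notMem (by simp)]
      push_cast
      rw [ih, h]; ring
    · rw [if_neg (by omega), ih, h]; push_cast; ring

noncomputable def DK (k i n : ℕ) : ℝ := (fg k i n).2 * thK k - k * (fg k i n).1 - i

lemma DK_succ (k : ℕ) (hk : 2 ≤ k) (i n : ℕ) : DK k i (n+1) = (1 - thK k) * DK k i n := by
  have h := thK_quad k hk
  simp only [DK, fg]
  push_cast
  linear_combination ((fg k i n).2 : ℝ) * h

lemma DK_zero (k i : ℕ) : DK k i 0 = (i+1) * thK k - i := by
  simp [DK, fg]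

lemma DK_bounds (k : ℕ) (hk : 2 ≤ k) (i : ℕ) (hik : i + 1 ≤ k) (n : ℕ) :
    0 < DK k i n ∧ DK k i n < 1 := by
  have h := thK_quad k hk
  have h0 := thK_pos k hk
  have h1 := thK_lt k hk
  have hik' : (i:ℝ) + 1 ≤ k := by exact_mod_cast hik
  have hi : (0:ℝ) ≤ i := by positivity
  induction n with
  | zero =>
    rw [DK_zero]
    constructor
    · have : (i:ℝ) * thK k ^ 2 < k * thK k := by nlinarith [mul_pos h0 h0]
      have e : (k:ℝ) * ((i+1) * thK k - i) = k * thK k - i * thK k ^ 2 := by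
        linear_combination (i:ℝ) * h
      have : (0:ℝ) < k * ((i+1) * thK k - i) := by rw [e]; linarith
      exact pos_of_mul_pos_right this (by positivity)
    · nlinarith
  | succ n ih =>
    rw [DK_succ k hk]
    constructor
    · exact mul_pos (by linarith) ih.1
    · nlinarith [ih.1, ih.2]

lemma key_s15 (k : ℕ) (hk : 2 ≤ k) (i : ℕ) (hi : 1 ≤ i) (hik : i + 1 ≤ k) (n : ℕ) :
    ∀ p q : ℤ, 0 ≤ p → 0 ≤ q → 0 ≤ (p:ℝ) * thK k - k * q - i →
      (p:ℝ) * thK k - k * q - i < DK k i n → ((fg k i (n+1)).2 : ℤ) ≤ p := by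
  have h := thK_quad k hk
  have h0 := thK_pos k hk
  have h1 := thK_lt k hk
  have hik' : (i:ℝ) + 1 ≤ k := by exact_mod_cast hik
  have hi' : (1:ℝ) ≤ i := by exact_mod_cast hi
  have hkp : (0:ℤ) < k := by omega
  have hx : ∀ p q : ℤ, (p:ℝ) * thK k - k * q - i = (1 - thK k) *
      (((p - k * q - i : ℤ) : ℝ) * thK k - k * ((q - (p - k * q - i) : ℤ) : ℝ) - i) := by
    intro p q
    push_cast
    linear_combination ((p:ℝ) - k * q - i) * h
  have hp1 : ∀ p q : ℤ, 0 ≤ p → 0 ≤ (p:ℝ) * thK k - k * q - i → 0 ≤ p - k * q - i := by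
    intro p q hp hx0
    have hp' : (0:ℝ) ≤ p := by exact_mod_cast hp
    have : (0:ℝ) ≤ ((p - k * q - i : ℤ) : ℝ) := by push_cast; nlinarith
    exact_mod_cast this
  induction n with
  | zero =>
    intro p q hp hq hx0 hxD
    have hp' := hp1 p q hp hx0
    have hpos : 0 < p - k * q - i := by
      rcases hp'.lt_or_eq with h' | h'
      · exact h'
      · exfalso
        have e : (p:ℝ) = k * q + i := by
          have : p = k * q + i := by omega
          exact_mod_cast this
        have : (0:ℝ) ≤ k * q := by
          have : (0:ℤ) ≤ k * q := by positivity
          exact_mod_cast this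
        rw [e] at hx0
        nlinarith
    have hxx := hx p q
    have e : p = k * (q - (p - k * q - i)) + (k+1) * (p - k * q - i) + i := by ring
    generalize p - k * q - i = p' at *
    generalize q - p' = q' at *
    rw [hxx] at hx0 hxD
    have hx0' : 0 ≤ (p':ℝ) * thK k - k * q' - i :=
      nonneg_of_mul_nonneg_right hx0 (by linarith)
    have e0 : DK k i 0 = (1 - thK k) * (k + thK k - i) := by
      rw [DK_zero]; linear_combination h
    rw [e0] at hxD
    have hxD' := lt_of_mul_lt_mul_left hxD (by linarith)
    have hp1' : (1:ℝ) ≤ p' := by exact_mod_cast hpos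
    have hq' : 0 ≤ q' := by
      have : (k:ℝ) * (-1) < k * q' := by nlinarith
      have : (k:ℤ) * (-1) < k * q' := by exact_mod_cast this
      have := lt_of_mul_lt_mul_left this hkp.le
      omega
    have hq0 : (0:ℤ) ≤ k * q' := by positivity
    have hq0' : (0:ℝ) ≤ k * q' := by exact_mod_cast hq0
    have hpi : (i:ℤ) < p' := by
      have : (i:ℝ) < p' := by nlinarith
      exact_mod_cast this
    simp only [fg]
    push_cast
    rw [e]
    nlinarith
  | succ n ih =>
    intro p q hp hq hx0 hxD
    have hp' := hp1 p q hp hx0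
    have hxx := hx p q
    have e : p = k * (q - (p - k * q - i)) + (k+1) * (p - k * q - i) + i := by ring
    generalize p - k * q - i = p' at *
    generalize q - p' = q' at *
    rw [hxx] at hx0 hxD
    have hx0' : 0 ≤ (p':ℝ) * thK k - k * q' - i :=
      nonneg_of_mul_nonneg_right hx0 (by linarith)
    rw [DK_succ k hk] at hxD
    have hxD' := lt_of_mul_lt_mul_left hxD (by linarith)
    have hb := DK_bounds k hk i hik n
    have hb' := DK_bounds k hk i hik (n+1)
    have hp1' : (0:ℝ) ≤ p' := by exact_mod_cast hp'
    have hq' : 0 ≤ q' := by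
      have : (k:ℝ) * (-1) < k * q' := by nlinarith
      have : (k:ℤ) * (-1) < k * q' := by exact_mod_cast this
      have := lt_of_mul_lt_mul_left this hkp.le
      omega
    have hg := ih p' q' hp' hq' hx0' hxD'
    have hg' : ((fg k i (n+1)).2 : ℝ) ≤ p' := by exact_mod_cast hg
    have hf : ((fg k i (n+1)).1 : ℤ) ≤ q' := by
      have hD : DK k i (n+1) = (fg k i (n+1)).2 * thK k - k * (fg k i (n+1)).1 - i := rfl
      have : (k:ℝ) * ((fg k i (n+1)).1 - 1) < k * q' := by nlinarith
      have : (k:ℤ) * ((fg k i (n+1)).1 - 1) < k * q' := by exact_mod_cast this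
      have := lt_of_mul_lt_mul_left this hkp.le
      omega
    rw [fg]
    push_cast
    rw [e]
    gcongr

/-- A factor of length g^i_{n+1} of the prefix of length g^i_{n+2} which is
    not its suffix and which ends with the letter τ_i contains exactly g^i_n
    indices j with d_j = k+1. -/
theorem factor_ending_tau_i (k : ℕ) (hk : 2 ≤ k) (i : ℕ) (hi1 : 1 ≤ i)
    (hik : i ≤ k - 1) (n m : ℕ)
    (hlt : m + (fg k i (n + 1)).2 < (fg k i (n + 2)).2)
    (hd : dSeq k (m + (fg k i (n + 1)).2) = (k : ℤ) + 2)
    (hmod : ((Finset.Icc 1 (m + (fg k i (n + 1)).2)).filter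
        (fun j => dSeq k j = (k : ℤ) + 2)).card ≡ i [MOD k]) :
    ((Finset.Ioc m (m + (fg k i (n + 1)).2)).filter
        (fun j => dSeq k j = (k : ℤ) + 1)).card = (fg k i n).2 := by
  have hik' : i + 1 ≤ k := by omega
  have ht := tau_count k hk (m + (fg k i (n + 1)).2)
  have hs := sigma_count k hk m (fg k i (n + 1)).2
  have hb := DK_bounds k hk i hik' (n+1)
  have hD : DK k i (n+1) = (fg k i (n+1)).2 * thK k - k * (fg k i (n+1)).1 - i := rfl
  have hg : (fg k i (n+1)).2 = (fg k i n).2 + k * (fg k i (n+1)).1 + i := by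
    simp only [fg]; ring
  have hkey := key_s15 k hk i hi1 hik' (n+1)
  generalize ((Finset.Icc 1 (m + (fg k i (n + 1)).2)).filter
        (fun j => dSeq k j = (k : ℤ) + 2)).card = c at *
  have hc : c = k * (c / k) + i := by
    have h1 := Nat.div_add_mod c k
    have h2 : c % k = i := by
      rw [hmod, Nat.mod_eq_of_lt (by omega)]
    omega
  generalize c / k = q at *
  have hx : DK k i (n+1) ≤
      ((m + (fg k i (n + 1)).2 : ℕ) : ℝ) * thK k - k * q - i := by
    by_contra hcon
    push Not at hcon
    have hfl := Int.floor_le (((m + (fg k i (n + 1)).2 : ℕ) : ℝ) * thK k)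
    change ((tK k (m + (fg k i (n + 1)).2) : ℤ) : ℝ) ≤ _ at hfl
    rw [← ht, hc] at hfl
    push_cast at hfl
    have := hkey ((m + (fg k i (n + 1)).2 : ℕ) : ℤ) q (by positivity) (by positivity)
      (by push_cast; linarith) (by push_cast at hcon ⊢; linarith)
    have : (fg k i (n + 2)).2 ≤ m + (fg k i (n + 1)).2 := by exact_mod_cast this
    omega
  have hfl2 := Int.lt_floor_add_one (((m + (fg k i (n + 1)).2 : ℕ) : ℝ) * thK k)
  change _ < ((tK k (m + (fg k i (n + 1)).2) : ℤ) : ℝ) + 1 at hfl2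
  rw [← ht, hc] at hfl2
  have hm : tK k m = k * q - k * (fg k i (n+1)).1 := by
    unfold tK
    rw [Int.floor_eq_iff]
    push_cast at hfl2 hx ⊢
    constructor <;> nlinarith
  rw [← ht, hm, hc] at hs
  have hg' : ((fg k i (n+1)).2 : ℤ) = (fg k i n).2 + k * (fg k i (n+1)).1 + i := by
    exact_mod_cast hg
  have : (((Finset.Ioc m (m + (fg k i (n + 1)).2)).filter
        (fun j => dSeq k j = (k : ℤ) + 1)).card : ℤ) = (fg k i n).2 := by
    rw [hs]; push_cast; linarith
  exact_mod_cast this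
end

section
/- Let k ≥ 2 be an integer, α = (1+√(1+4/k))/2, β = kα+1, a_n = ⌊nα⌋, b_n = ⌊nβ⌋, d_n = b_n − b_{n−1}. Fix i ∈ {1,…,k−1} and suppose n ≥ 1 satisfies d_n = k+2 and #{j : 1 ≤ j ≤ n, d_j = k+2} ≡ i (mod k) (i.e., the P-position (a_n,b_n) has index i). Let m ≥ 1 be such that g^i_m ≤ b_n < g^i_{m+1}. Then n ≥ g^i_{m−1}, and a_n − f^i_m = a_{n − g^i_{m−1}} and b_n − g^i_m = b_{n − g^i_{m−1}}. (Hence from the position (a_n, b_n − 1) the Type III move (f^i_m, g^i_m − 1) leads to the P-position (a_{n − g^i_{m−1}}, b_{n − g^i_{m−1}}).) -/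
lemma theta_ex (k : ℕ) (hk : 2 ≤ k) : ∃ θ : ℝ, 0 < θ ∧ θ < 1 ∧ θ^2 + k*θ = k ∧
    (k:ℝ) * alphaK k = k + θ ∧ betaK k = k + 1 + θ := by
  have hk0 : (2:ℝ) ≤ k := by exact_mod_cast hk
  have hs : Real.sqrt (1 + 4 / (k:ℝ)) ^ 2 = 1 + 4 / k := Real.sq_sqrt (by positivity)
  have hs0 := Real.sqrt_nonneg (1 + 4 / (k:ℝ))
  set s := Real.sqrt (1 + 4 / (k:ℝ)) with hsd
  have hks : (k:ℝ) * s^2 = k + 4 := by rw [hs]; field_simp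
  have h1 : 1 < s := by
    by_contra h
    push Not at h
    nlinarith [mul_le_mul h h hs0 (by norm_num)]
  have hq : ((k:ℝ) * (s-1)/2)^2 + k * ((k:ℝ) * (s-1)/2) = k := by
    linear_combination (k:ℝ)/4 * hks
  have hpos : 0 < (k:ℝ) * (s-1)/2 := by
    have : 0 < s - 1 := by linarith
    positivity
  refine ⟨(k:ℝ) * (s-1)/2, hpos, ?_, hq, ?_, ?_⟩
  · nlinarith
  · unfold alphaK; rw [← hsd]; ring
  · unfold betaK alphaK; rw [← hsd]; ring

lemma bSeq_eq_s16 (k : ℕ) (θ : ℝ) (hb : betaK k = k + 1 + θ) (n : ℕ) :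
    bSeq k n = (k+1) * n + ⌊(n:ℝ) * θ⌋ := by
  unfold bSeq
  rw [hb, show (n:ℝ) * (k + 1 + θ) = (((k+1) * n : ℤ) : ℝ) + n * θ by push_cast; ring,
    Int.floor_intCast_add]

lemma aSeq_eq (k : ℕ) (hk : 2 ≤ k) (θ : ℝ) (ha : (k:ℝ) * alphaK k = k + θ) (n : ℕ) (q : ℤ)
    (h1 : (k:ℝ) * q ≤ n * θ) (h2 : n * θ < k * q + k) : aSeq k n = n + q := by
  have hk0 : (0:ℝ) < k := by exact_mod_cast (by omega : 0 < k)
  have e : (k:ℝ) * (n * alphaK k) = k * n + n * θ := by linear_combination (n:ℝ) * ha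
  unfold aSeq
  rw [Int.floor_eq_iff]
  push_cast
  constructor
  · apply le_of_mul_le_mul_left _ hk0
    rw [e]; linarith
  · apply lt_of_mul_lt_mul_left _ hk0.le
    rw [e]; linarith

lemma card_eq (k : ℕ) (θ : ℝ) (h0 : 0 < θ) (h1 : θ < 1) (hb : betaK k = k + 1 + θ) (n : ℕ) :
    (((Finset.Icc 1 n).filter (fun j => dSeq k j = (k : ℤ) + 2)).card : ℤ) = ⌊(n:ℝ) * θ⌋ := by
  induction n with
  | zero => simp
  | succ n ih =>
    have hd : dSeq k (n+1) = k + 1 + (⌊((n+1:ℕ):ℝ) * θ⌋ - ⌊(n:ℝ) * θ⌋) := by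
      unfold dSeq
      rw [bSeq_eq_s16 k θ hb, bSeq_eq_s16 k θ hb]
      simp only [Nat.add_sub_cancel]
      push_cast; ring
    have hl : ⌊(n:ℝ) * θ⌋ ≤ ⌊((n+1:ℕ):ℝ) * θ⌋ := by
      apply Int.floor_le_floor; push_cast; nlinarith
    have hu : ⌊((n+1:ℕ):ℝ) * θ⌋ ≤ ⌊(n:ℝ) * θ⌋ + 1 := by
      rw [← Int.floor_add_one]
      apply Int.floor_le_floor; push_cast; nlinarith
    rw [← Finset.insert_Icc_right_eq_Icc_add_one (by omega), Finset.filter_insert]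
    split_ifs with h
    · rw [Finset.card_insert_of_notMem (by simp)]
      push_cast at *
      omega
    · push_cast at *
      omega

lemma g_eq (k i : ℕ) (θ : ℝ) (hq : θ^2 + k*θ = k) (j : ℕ) :
    ((fg k i j).2 : ℝ) * θ - k * (fg k i j).1 - i = (1-θ)^(j+1) * (k + θ - i) := by
  induction j with
  | zero => simp [fg]; linear_combination hq
  | succ j ih =>
    rw [pow_succ, mul_right_comm, ← ih]
    simp only [fg]; push_cast
    linear_combination ((fg k i j).2 : ℝ) * hq

lemma no_small (k i : ℕ) (hi0' : 1 ≤ i) (hi : i < k) (θ : ℝ) (h0 : 0 < θ) (h1 : θ < 1) (hq : θ^2 + k*θ = k)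
    (j : ℕ) : ∀ n q : ℤ, 0 < n → n < ((fg k i j).2 : ℤ) → 0 ≤ (n:ℝ) * θ - k * q - i →
      (n:ℝ) * θ - k * q - i < (1-θ)^j * (k + θ - i) → False := by
  have hk0 : (0:ℝ) < k := by exact_mod_cast (by omega : 0 < k)
  induction j with
  | zero =>
    intro n q hn hng he hd
    simp [fg] at hng
    have hn1 : (1:ℝ) ≤ n := by exact_mod_cast hn
    have hni : (n:ℝ) ≤ i := by exact_mod_cast (by omega : n ≤ (i:ℤ))
    have hq1 : (q:ℝ) < 0 := by
      by_contra h
      push Not at h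
      nlinarith [mul_nonneg hk0.le h]
    have hq2 : (q:ℝ) ≤ -1 := by
      have : q < 0 := by exact_mod_cast hq1
      exact_mod_cast (by omega : q ≤ -1)
    simp at hd
    nlinarith
  | succ j ih =>
    intro n q hn hng he hd
    have hn1 : (0:ℝ) < n := by exact_mod_cast hn
    have hngr : (n:ℝ) < ((fg k i (j+1)).2 : ℝ) := by exact_mod_cast hng
    have hg := g_eq k i θ hq (j+1)
    have hg0 : ((fg k i (j+1)).2 : ℝ) - k * (fg k i (j+1)).1 - i = (fg k i j).2 := by
      simp only [fg]; push_cast; ring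
    have ht : 0 < 1 - θ := by linarith
    have hi' : (i:ℝ) + 1 ≤ k := by exact_mod_cast hi
    have hD : (1-θ)^(j+2) * (k + θ - i) ≤ (1-θ)^(j+1) * (k + θ - i) := by
      apply mul_le_mul_of_nonneg_right _ (by linarith)
      exact pow_le_pow_of_le_one ht.le (by linarith) (by omega)
    have hdk := g_eq k i θ hq j
    have key : (1-θ) * (((n - k*q - i : ℤ):ℝ) * θ - k * ((q - (n - k*q - i) : ℤ):ℝ) - i)
        = (n:ℝ) * θ - k * q - i := by
      push_cast
      linear_combination (i + k*q - n : ℝ) * hq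
    apply ih (n - k*q - i) (q - (n - k*q - i))
    · have : (0:ℝ) < ((n - k*q - i : ℤ):ℝ) := by push_cast; nlinarith
      exact_mod_cast this
    · have hD1 : (1-θ)^(j+1) * (k + θ - i) < 1 := by
        have : (1-θ)^(j+1) * (k + θ - i) ≤ (1-θ)^1 * (k + θ - i) := by
          apply mul_le_mul_of_nonneg_right _ (by linarith)
          exact pow_le_pow_of_le_one ht.le (by linarith) (by omega)
        nlinarith
      have hD2 : 0 < (1-θ)^(j+2) * (k + θ - i) :=
        mul_pos (pow_pos ht _) (by linarith)
      have hm := mul_lt_mul_of_pos_right hngr ht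
      have hlt : ((n - k*q - i : ℤ):ℝ) < (((fg k i j).2 + 1 : ℤ) : ℝ) := by
        push_cast
        linarith
      have hle : n - k*q - i < ((fg k i j).2 : ℤ) + 1 := by exact_mod_cast hlt
      rcases lt_or_eq_of_le (Int.lt_add_one_iff.mp hle) with h | h
      · exact h
      exfalso
      have e0 : 0 ≤ (((n - k*q - i : ℤ):ℝ) * θ - k * ((q - (n - k*q - i) : ℤ):ℝ) - i) :=
        nonneg_of_mul_nonneg_right (by rw [key]; exact he) ht
      have e1 : (((n - k*q - i : ℤ):ℝ) * θ - k * ((q - (n - k*q - i) : ℤ):ℝ) - i)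
          < (1-θ)^j * (k + θ - i) := by
        apply lt_of_mul_lt_mul_left _ ht.le
        rw [key, ← mul_assoc, ← pow_succ']
        exact hd
      have hDk : (1-θ)^j * (k + θ - i) ≤ k + θ - i :=
        mul_le_of_le_one_left (by linarith) (pow_le_one₀ ht.le (by linarith))
      have hD3 : 0 < (1-θ)^(j+1) * (k + θ - i) :=
        mul_pos (pow_pos ht _) (by linarith)
      have hi0 : (1:ℝ) ≤ i := by exact_mod_cast hi0'
      obtain ⟨p, hp⟩ : ∃ p : ℤ, p = q - (n - k*q - i) := ⟨_, rfl⟩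
      rw [← hp, h] at e0 e1
      rw [h] at hp
      push_cast at e0 e1
      rcases lt_trichotomy p ((fg k i j).1 : ℤ) with hpf | hpf | hpf
      · have : (p:ℝ) + 1 ≤ (fg k i j).1 := by exact_mod_cast hpf
        nlinarith
      · have hgs : (fg k i (j+1)).2 = k * (fg k i j).1 + (k + 1) * (fg k i j).2 + i := rfl
        have hqq : q = (fg k i j).1 + (fg k i j).2 := by omega
        rw [hgs] at hng
        push_cast at hng
        rw [hqq] at h
        linarith
      · have : ((fg k i j).1 : ℝ) + 1 ≤ p := by exact_mod_cast hpf
        nlinarith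
    · exact nonneg_of_mul_nonneg_right (by rw [key]; exact he) ht
    · apply lt_of_mul_lt_mul_left _ ht.le
      rw [key, ← mul_assoc, ← pow_succ']
      exact hd

set_option maxHeartbeats 2000000 in
/-- From a position (a_n, b_n − 1) where the P-position (a_n, b_n) has index i,
    the maximal applicable Type III move for i leads to a P-position:
    if g^i_m ≤ b_n < g^i_{m+1} then n ≥ g^i_{m−1} and
    (a_n − f^i_m, b_n − g^i_m) = (a_{n − g^i_{m−1}}, b_{n − g^i_{m−1}}). -/
theorem typeIII_winning_move (k : ℕ) (hk : 2 ≤ k) (i : ℕ) (hi1 : 1 ≤ i)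
    (hik : i ≤ k - 1) (n : ℕ) (hn : 1 ≤ n) (hd : dSeq k n = (k : ℤ) + 2)
    (hmod : ((Finset.Icc 1 n).filter
        (fun j => dSeq k j = (k : ℤ) + 2)).card ≡ i [MOD k])
    (m : ℕ) (hm : 1 ≤ m)
    (h1 : ((fg k i m).2 : ℤ) ≤ bSeq k n)
    (h2 : bSeq k n < ((fg k i (m + 1)).2 : ℤ)) :
    (fg k i (m - 1)).2 ≤ n ∧
    aSeq k n - ((fg k i m).1 : ℤ) = aSeq k (n - (fg k i (m - 1)).2) ∧
    bSeq k n - ((fg k i m).2 : ℤ) = bSeq k (n - (fg k i (m - 1)).2) := by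
  obtain ⟨θ, h0, hlt, hq, ha, hb⟩ := theta_ex k hk
  obtain ⟨j, rfl⟩ : ∃ j, m = j + 1 := ⟨m - 1, by omega⟩
  simp only [Nat.add_sub_cancel]
  have hi : i < k := by omega
  have hk0 : (0:ℝ) < k := by exact_mod_cast (by omega : 0 < k)
  have hi' : (i:ℝ) + 1 ≤ k := by exact_mod_cast hi
  have hi1' : (1:ℝ) ≤ i := by exact_mod_cast hi1
  have hc := card_eq k θ h0 hlt hb n
  set N := ((Finset.Icc 1 n).filter (fun j => dSeq k j = (k : ℤ) + 2)).card with hN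
  obtain ⟨q, hNq⟩ : ∃ q : ℤ, (N:ℤ) = k * q + i := by
    have := (Nat.modEq_iff_dvd.mp hmod.symm)
    obtain ⟨q, hq⟩ := this
    exact ⟨q, by linarith⟩
  have hfl : ⌊(n:ℝ) * θ⌋ = k * q + i := by rw [← hc, hNq]
  obtain ⟨he0, he1⟩ := Int.floor_eq_iff.mp hfl
  push_cast at he0 he1
  have hbn := bSeq_eq_s16 k θ hb n
  rw [hfl] at hbn
  have ht : 0 < 1 - θ := by linarith
  have hg := g_eq k i θ hq j
  have hg' := g_eq k i θ hq (j+1)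
  have hDpos : ∀ l : ℕ, 0 < (1-θ)^l * (k + θ - i) := fun l =>
    mul_pos (pow_pos ht l) (by linarith)
  have hDle : (1-θ)^(j+1) * (k + θ - i) < θ := by
    have : (1-θ)^(j+1) * (k + θ - i) ≤ (1-θ)^1 * (k + θ - i) := by
      apply mul_le_mul_of_nonneg_right _ (by linarith)
      exact pow_le_pow_of_le_one ht.le (by linarith) (by omega)
    nlinarith
  have hf1 : (fg k i (j+1)).1 = (fg k i j).1 + (fg k i j).2 := rfl
  have hg1 : (fg k i (j+1)).2 = k * (fg k i j).1 + (k + 1) * (fg k i j).2 + i := rfl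
  have hg2 : (fg k i (j+2)).2 = k * (fg k i (j+1)).1 + (k + 1) * (fg k i (j+1)).2 + i := rfl
  have hkz : (0:ℤ) < k := by omega
  have hng : (fg k i j).2 ≤ n := by
    by_contra hcon
    push Not at hcon
    have hc1 : (n:ℝ) + 1 ≤ (fg k i j).2 := by exact_mod_cast hcon
    have : (k:ℝ) * q < k * (fg k i j).1 := by nlinarith
    have : (k:ℤ) * q < k * (fg k i j).1 := by exact_mod_cast this
    rw [hbn, hg1] at h1
    push_cast at h1
    have : (n:ℤ) < (fg k i j).2 := by exact_mod_cast hcon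
    nlinarith
  have hng' : n < (fg k i (j+1)).2 := by
    by_contra hcon
    push Not at hcon
    have hc1 : ((fg k i (j+1)).2 : ℝ) ≤ n := by exact_mod_cast hcon
    have : (k:ℝ) * (fg k i (j+1)).1 < k * q + 1 := by nlinarith [hDpos (j+1+1)]
    have : (k:ℤ) * (fg k i (j+1)).1 < k * q + 1 := by exact_mod_cast this
    rw [hbn, hg2] at h2
    push_cast at h2
    have : ((fg k i (j+1)).2 : ℤ) ≤ n := by exact_mod_cast hcon
    nlinarith
  have hge : (1-θ)^(j+1) * (k + θ - i) ≤ (n:ℝ) * θ - k * q - i := by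
    by_contra hcon
    push Not at hcon
    exact no_small k i hi1 hi θ h0 hlt hq (j+1) n q (by exact_mod_cast hn) (by exact_mod_cast hng')
      (by push_cast; linarith) (by push_cast; linarith)
  have hp := hDpos (j+1)
  have hsub : ((n - (fg k i j).2 : ℕ) : ℝ) = n - (fg k i j).2 := Nat.cast_sub hng
  have hsubz : ((n - (fg k i j).2 : ℕ) : ℤ) = n - (fg k i j).2 := Nat.cast_sub hng
  refine ⟨hng, ?_, ?_⟩
  · rw [aSeq_eq k hk θ ha n q (by linarith) (by linarith),
      aSeq_eq k hk θ ha (n - (fg k i j).2) (q - (fg k i j).1), hf1, hsubz]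
    · push_cast; ring
    · rw [hsub]; push_cast; linarith
    · rw [hsub]; push_cast; linarith
  · have : ⌊((n - (fg k i j).2 : ℕ) : ℝ) * θ⌋ = k * (q - (fg k i j).1) := by
      rw [Int.floor_eq_iff, hsub]
      push_cast
      constructor <;> linarith
    rw [hbn, bSeq_eq_s16 k θ hb, this, hsubz, hg1]
    push_cast; ring
end

section
/- Let k ≥ 1 be an integer, α = (1+√(1+4/k))/2, β = kα+1, a_n = ⌊nα⌋, b_n = ⌊nβ⌋, and let δ_n = b_n − a_n denote the gap of the n-th P-position. Then for every n ≥ 1, δ_n − δ_{n−1} ∈ {k, k+1}. -/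
/-- The gaps δ_n = b_n − a_n satisfy δ_n − δ_{n−1} ∈ {k, k+1} for n ≥ 1. -/
theorem gap_difference (k : ℕ) (hk : 1 ≤ k) (n : ℕ) (hn : 1 ≤ n) :
    (bSeq k n - aSeq k n) - (bSeq k (n - 1) - aSeq k (n - 1)) = (k : ℤ) ∨
    (bSeq k n - aSeq k n) - (bSeq k (n - 1) - aSeq k (n - 1)) = (k : ℤ) + 1 := by
  obtain ⟨m, rfl⟩ : ∃ m, n = m + 1 := ⟨n - 1, by omega⟩
  have hk' : (1 : ℝ) ≤ (k : ℝ) := by exact_mod_cast hk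
  have h1 : 1 < alphaK k := by
    have : 1 < Real.sqrt (1 + 4 / (k : ℝ)) := by
      rw [Real.lt_sqrt (by norm_num)]
      have : 0 < 4 / (k : ℝ) := by positivity
      linarith
    unfold alphaK
    linarith
  have hq : (k : ℝ) * alphaK k * (alphaK k - 1) = 1 := by
    have hs : Real.sqrt (1 + 4 / (k : ℝ)) ^ 2 = 1 + 4 / (k : ℝ) :=
      Real.sq_sqrt (by positivity)
    have hk4 : (k : ℝ) * (4 / (k : ℝ)) = 4 := by field_simp
    unfold alphaK
    linear_combination (k : ℝ) / 4 * hs + hk4 / 4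
  rw [Nat.add_sub_cancel]
  unfold bSeq aSeq betaK
  generalize alphaK k = α at *
  have h2 : (k : ℝ) * (α - 1) < 1 := by nlinarith [mul_pos (show (0:ℝ) < k by linarith) (sub_pos.2 h1)]
  have h3 : 0 < (k : ℝ) * (α - 1) := mul_pos (by linarith) (by linarith)
  have h4 : α < 2 := by nlinarith
  push_cast
  have a1 := Int.floor_le ((m : ℝ) * α)
  have a2 := Int.lt_floor_add_one ((m : ℝ) * α)
  have a3 := Int.floor_le (((m : ℝ) + 1) * α)
  have a4 := Int.lt_floor_add_one (((m : ℝ) + 1) * α)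
  have b1 := Int.floor_le ((m : ℝ) * (k * α + 1))
  have b2 := Int.lt_floor_add_one ((m : ℝ) * (k * α + 1))
  have b3 := Int.floor_le (((m : ℝ) + 1) * (k * α + 1))
  have b4 := Int.lt_floor_add_one (((m : ℝ) + 1) * (k * α + 1))
  have key : ∀ p : ℤ, (m : ℝ) * α < p + m → (p : ℝ) + m + 1 ≤ ((m : ℝ) + 1) * α →
      ⌊(m : ℝ) * (k * α + 1)⌋ < m * (k + 1) + k * p ∧
      (m + 1) * (k + 1) + k * p ≤ ⌊((m : ℝ) + 1) * (k * α + 1)⌋ := by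
    intro p hp1 hp2
    constructor
    · rw [Int.floor_lt]
      push_cast
      nlinarith
    · rw [Int.le_floor]
      push_cast
      nlinarith
  have key' := key (⌊(m : ℝ) * α⌋ + 1 - m)
  generalize ⌊(m : ℝ) * α⌋ = A at *
  generalize ⌊((m : ℝ) + 1) * α⌋ = A' at *
  generalize ⌊(m : ℝ) * (k * α + 1)⌋ = B at *
  generalize ⌊((m : ℝ) + 1) * (k * α + 1)⌋ = B' at *
  have c1 : A < A' := by
    have : (A : ℝ) < A' := by linarith
    exact_mod_cast this
  have c2 : A' < A + 3 := by
    have : (A' : ℝ) < A + 3 := by linarith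
    exact_mod_cast this
  have c3 : B + k < B' := by
    have : (B : ℝ) + k < B' := by linarith
    exact_mod_cast this
  have c4 : B' < B + k + 3 := by
    have : (B' : ℝ) < B + k + 3 := by linarith
    exact_mod_cast this
  by_cases h : A' = A + 2
  · have h' : (A' : ℝ) = A + 2 := by exact_mod_cast h
    obtain ⟨d1, d2⟩ := key' (by push_cast; linarith) (by push_cast; linarith)
    have : B + k + 2 ≤ B' := by linarith
    left; omega
  · omega
end

section
/- Let k ≥ 1 be an integer, β = k·(1+√(1+4/k))/2 + 1, b_n = ⌊nβ⌋ and d_n = b_n − b_{n−1}. Consider the two-letter alphabet {σ, τ} and the morphism φ defined by φ(σ) = στ^k (the letter σ followed by k copies of τ) and φ(τ) = στ^{k+1}, extended to words by concatenation, and let w_N = φ^N(σ) be the N-th iterate applied to the one-letter word σ. Then for every N ≥ 0 and every j with 1 ≤ j ≤ length(w_N), the j-th letter of w_N is σ if and only if d_j = k+1, and is τ if and only if d_j = k+2. -/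
/-- The morphism φ on the alphabet {σ, τ}, encoded with `false` = σ and
    `true` = τ: φ(σ) = στ^k, φ(τ) = στ^{k+1}. -/
def phi (k : ℕ) : Bool → List Bool
  | false => false :: List.replicate k true
  | true => false :: List.replicate (k + 1) true

/-- w_N = φ^N(σ). -/
def wordN (k N : ℕ) : List Bool := (fun w => w.flatMap (phi k))^[N] [false]

noncomputable def thetaK (k : ℕ) : ℝ := betaK k - (k + 1)

lemma theta_facts (k : ℕ) (hk : 1 ≤ k) :
    0 < thetaK k ∧ thetaK k < 1 ∧ betaK k * (1 - thetaK k) = 1 ∧ 0 < betaK k := by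
  have hk' : (1 : ℝ) ≤ k := by exact_mod_cast hk
  have hk0 : (0 : ℝ) < k := by linarith
  have h0 : (0 : ℝ) ≤ 1 + 4 / (k : ℝ) := by positivity
  have hs := Real.sq_sqrt h0
  have hs0 := Real.sqrt_nonneg (1 + 4 / (k : ℝ))
  have hkk : (k : ℝ) * (4 / k) = 4 := by field_simp
  have ha : (k : ℝ) * alphaK k ^ 2 = k * alphaK k + 1 := by
    unfold alphaK
    set s := Real.sqrt (1 + 4 / (k : ℝ))
    have : (k : ℝ) * s ^ 2 = k + 4 := by rw [hs]; linarith
    nlinarith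
  have ha0 : 0 < alphaK k := by unfold alphaK; positivity
  have ha1 : 1 < alphaK k := by
    by_contra h
    push Not at h
    nlinarith [mul_nonneg hk0.le (mul_nonneg ha0.le (sub_nonneg.2 h))]
  have hkey : (k * (alphaK k - 1)) * alphaK k = 1 := by nlinarith
  have ht : thetaK k = k * (alphaK k - 1) := by unfold thetaK betaK; ring
  have ht0 : 0 < k * (alphaK k - 1) := mul_pos hk0 (by linarith)
  refine ⟨by rw [ht]; exact ht0, by rw [ht]; nlinarith, ?_, by unfold betaK; positivity⟩
  rw [ht]
  unfold betaK
  have : (k : ℝ) * (k * (alphaK k - 1) * alphaK k) = k := by rw [hkey, mul_one]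
  nlinarith

noncomputable def xK (k i : ℕ) : Bool :=
  !decide (⌊((i + 1 : ℕ) : ℝ) * thetaK k⌋ = ⌊(i : ℝ) * thetaK k⌋)

noncomputable def BK (k m : ℕ) : ℕ := ⌊(m : ℝ) * betaK k⌋₊

lemma x_false_iff (k i : ℕ) (hk : 1 ≤ k) : xK k i = false ↔
    ∃ p : ℤ, (p : ℝ) ≤ i * thetaK k ∧ (i + 1) * thetaK k < p + 1 := by
  obtain ⟨t0, t1, -, -⟩ := theta_facts k hk
  simp only [xK, Bool.not_eq_false', decide_eq_true_eq]
  push_cast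
  constructor
  · intro h
    refine ⟨⌊(i : ℝ) * thetaK k⌋, Int.floor_le _, ?_⟩
    rw [← h]; exact Int.lt_floor_add_one _
  · rintro ⟨p, h1, h2⟩
    have e1 : ⌊(i : ℝ) * thetaK k⌋ = p := Int.floor_eq_iff.2 ⟨h1, by nlinarith⟩
    have e2 : ⌊((i : ℝ) + 1) * thetaK k⌋ = p := Int.floor_eq_iff.2 ⟨by nlinarith, h2⟩
    rw [e1, e2]

lemma B_bounds (k m : ℕ) (hk : 1 ≤ k) :
    (BK k m : ℝ) ≤ m * betaK k ∧ (m : ℝ) * betaK k < BK k m + 1 := by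
  obtain ⟨t0, t1, tb, b0⟩ := theta_facts k hk
  exact ⟨Nat.floor_le (by positivity), Nat.lt_floor_add_one _⟩

lemma x_B (k m : ℕ) (hk : 1 ≤ k) : xK k (BK k m) = false := by
  obtain ⟨t0, t1, tb, b0⟩ := theta_facts k hk
  obtain ⟨h1, h2⟩ := B_bounds k m hk
  rw [x_false_iff k _ hk]
  refine ⟨(BK k m : ℤ) - m, ?_, ?_⟩ <;> push_cast
  · have := mul_le_mul_of_nonneg_right h1 (by linarith : 0 ≤ 1 - thetaK k)
    rw [mul_assoc, tb] at this
    linarith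
  · have := mul_lt_mul_of_pos_right h2 (by linarith : 0 < 1 - thetaK k)
    rw [mul_assoc, tb] at this
    linarith

lemma x_between (k m i : ℕ) (hk : 1 ≤ k) (h1 : BK k m < i) (h2 : i < BK k (m + 1)) :
    xK k i = true := by
  obtain ⟨t0, t1, tb, b0⟩ := theta_facts k hk
  obtain ⟨-, h3⟩ := B_bounds k m hk
  obtain ⟨h4, -⟩ := B_bounds k (m+1) hk
  have h1' : (BK k m : ℝ) + 1 ≤ i := by exact_mod_cast h1
  have h2' : (i : ℝ) + 1 ≤ BK k (m + 1) := by exact_mod_cast h2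
  by_contra hx
  rw [Bool.not_eq_true, x_false_iff k _ hk] at hx
  obtain ⟨p, hp1, hp2⟩ := hx
  push_cast at h4
  have a1 := mul_lt_mul_of_pos_right (h3.trans_le h1') (by linarith : 0 < 1 - thetaK k)
  have a2 := mul_le_mul_of_nonneg_right (h2'.trans h4) (by linarith : 0 ≤ 1 - thetaK k)
  rw [mul_assoc, tb] at a1 a2
  have c1 : (m : ℝ) < i - p := by linarith
  have c2 : (i : ℝ) - p < m + 1 := by linarith
  have c1' : (m : ℤ) < i - p := by exact_mod_cast c1
  have c2' : (i : ℤ) - p < m + 1 := by exact_mod_cast c2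
  omega

lemma b_eq (k n : ℕ) : bSeq k n = n * (k + 1) + ⌊(n : ℝ) * thetaK k⌋ := by
  unfold bSeq
  have : (n : ℝ) * betaK k = ((n * (k + 1) : ℤ) : ℝ) + n * thetaK k := by
    unfold thetaK; push_cast; ring
  rw [this, Int.floor_intCast_add]

lemma d_eq (k i : ℕ) (hk : 1 ≤ k) :
    dSeq k (i + 1) = k + 1 + (if xK k i then 1 else 0) := by
  obtain ⟨t0, t1, tb, b0⟩ := theta_facts k hk
  unfold dSeq
  rw [Nat.add_sub_cancel, b_eq, b_eq]
  by_cases h : ⌊((i + 1 : ℕ) : ℝ) * thetaK k⌋ = ⌊(i : ℝ) * thetaK k⌋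
  · simp only [xK, h]; push_cast; simp; ring
  · have l1 : ⌊(i : ℝ) * thetaK k⌋ ≤ ⌊((i + 1 : ℕ) : ℝ) * thetaK k⌋ :=
      Int.floor_mono (by push_cast; nlinarith)
    have l2 : ⌊((i + 1 : ℕ) : ℝ) * thetaK k⌋ ≤ ⌊(i : ℝ) * thetaK k⌋ + 1 := by
      rw [← Int.floor_add_one]
      exact Int.floor_mono (by push_cast; nlinarith)
    have l3 : ⌊((i + 1 : ℕ) : ℝ) * thetaK k⌋ = ⌊(i : ℝ) * thetaK k⌋ + 1 := by omega
    simp only [xK, l3]; push_cast; simp; ring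

lemma B_succ (k m : ℕ) (hk : 1 ≤ k) : BK k (m + 1) = BK k m + (phi k (xK k m)).length := by
  obtain ⟨t0, t1, tb, b0⟩ := theta_facts k hk
  have hB : ∀ n, (BK k n : ℤ) = bSeq k n := fun n =>
    Int.natCast_floor_eq_floor (by positivity)
  have hd := d_eq k m hk
  unfold dSeq at hd
  rw [Nat.add_sub_cancel, ← hB, ← hB] at hd
  cases hx : xK k m <;> simp [hx, phi] at hd ⊢ <;> omega

lemma block (k m : ℕ) (hk : 1 ≤ k) :
    (List.range (phi k (xK k m)).length).map (fun i => xK k (BK k m + i)) = phi k (xK k m) := by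
  have hs := B_succ k m hk
  obtain ⟨L, hL⟩ : ∃ L, phi k (xK k m) = false :: List.replicate L true := by
    cases xK k m
    · exact ⟨k, rfl⟩
    · exact ⟨k + 1, rfl⟩
  rw [hL] at hs ⊢
  simp only [List.length_cons, List.length_replicate] at hs ⊢
  rw [List.range_succ_eq_map, List.map_cons, List.map_map, Nat.add_zero, x_B k m hk]
  congr 1
  rw [List.eq_replicate_iff]
  refine ⟨by simp, ?_⟩
  intro b hb
  simp only [List.mem_map, List.mem_range] at hb
  obtain ⟨a, ha, rfl⟩ := hb
  exact x_between k m _ hk (by simp) (by rw [hs]; simp; omega)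

lemma flat (k n : ℕ) (hk : 1 ≤ k) :
    ((List.range n).map (xK k)).flatMap (phi k) = (List.range (BK k n)).map (xK k) := by
  induction n with
  | zero => simp [BK]
  | succ n ih =>
    rw [List.range_succ, List.map_append, List.flatMap_append, ih, B_succ k n hk,
      List.range_add, List.map_append, List.map_map]
    congr 1
    simpa [Function.comp_def] using (block k n hk).symm

lemma word_eq (k N : ℕ) (hk : 1 ≤ k) : ∃ n, wordN k N = (List.range n).map (xK k) := by
  induction N with
  | zero =>
    refine ⟨1, ?_⟩
    have := x_B k 0 hk
    simp [BK] at this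
    simp [wordN, this]
  | succ N ih =>
    obtain ⟨n, hn⟩ := ih
    refine ⟨BK k n, ?_⟩
    rw [← flat k n hk, ← hn]
    unfold wordN
    rw [Function.iterate_succ_apply']

/-- For every N and every 1 ≤ j ≤ length(φ^N(σ)), the j-th letter of φ^N(σ)
    is σ iff d_j = k+1, and is τ iff d_j = k+2. -/
theorem word_letters_match_d (k : ℕ) (hk : 1 ≤ k) (N j : ℕ) (hj1 : 1 ≤ j)
    (hj2 : j ≤ (wordN k N).length) :
    ((wordN k N).getD (j - 1) false = false ↔ dSeq k j = (k : ℤ) + 1) ∧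
    ((wordN k N).getD (j - 1) false = true ↔ dSeq k j = (k : ℤ) + 2) := by
  obtain ⟨n, hn⟩ := word_eq k N hk
  obtain ⟨i, rfl⟩ : ∃ i, j = i + 1 := ⟨j - 1, by omega⟩
  rw [hn] at hj2 ⊢
  simp only [List.length_map, List.length_range] at hj2
  have hi : i < n := hj2
  have : ((List.range n).map (xK k)).getD (i + 1 - 1) false = xK k i := by
    simp [List.getD, hi]
  rw [this, d_eq k i hk]
  cases xK k i <;> simp <;> omega
end

section
/- Let k ≥ 2 be an integer and γ = (√(k²+4k) − k)/2 (the positive root of x² + kx − k = 0, which lies in (1/2,1)). Consider the two-letter alphabet {0,1} and the morphism θ defined by θ(0) = 1^k 0 (k copies of 1 followed by 0) and θ(1) = 1^k 0 1, extended to words by concatenation, and let v_N = θ^N(1) be the N-th iterate applied to the one-letter word 1. Then for every N ≥ 0 and every j with 1 ≤ j ≤ length(v_N), the j-th letter of v_N is 1 if and only if ⌊(j+1)γ⌋ − ⌊jγ⌋ = 1 (and is 0 if and only if ⌊(j+1)γ⌋ − ⌊jγ⌋ = 0). In other words, lim_{N→∞} θ^N(1) is the characteristic Sturmian word of γ. 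-/
/-- γ = (√(k² + 4k) − k)/2, the positive root of x² + kx − k = 0. -/
noncomputable def gammaK (k : ℕ) : ℝ := (Real.sqrt ((k : ℝ) ^ 2 + 4 * k) - k) / 2

/-- The morphism θ on the alphabet {0, 1}, encoded with `false` = 0 and
    `true` = 1: θ(0) = 1^k 0, θ(1) = 1^k 0 1. -/
def theta (k : ℕ) : Bool → List Bool
  | false => List.replicate k true ++ [false]
  | true => List.replicate k true ++ [false, true]

/-- v_N = θ^N(1). -/
def vWord (k N : ℕ) : List Bool := (fun w => w.flatMap (theta k))^[N] [true]

def GoodW (g : ℝ) : ℕ → List Bool → Prop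
  | _, [] => True
  | m, a :: w => (⌊((m : ℝ) + 2) * g⌋ - ⌊((m : ℝ) + 1) * g⌋ = if a then 1 else 0) ∧ GoodW g (m + 1) w

lemma GoodW_append (g : ℝ) (u v : List Bool) : ∀ m : ℕ, GoodW g m u → GoodW g (m + u.length) v →
    GoodW g m (u ++ v) := by
  induction u with
  | nil => intro m _ h; simpa using h
  | cons a u ih =>
    intro m h1 h2
    refine ⟨h1.1, ih _ h1.2 ?_⟩
    have : m + 1 + u.length = m + (a :: u).length := by simp; ring
    rw [this]; exact h2

lemma GoodW_replicate (g : ℝ) (k : ℕ) : ∀ m : ℕ,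
    (∀ i : ℕ, i < k → ⌊((m : ℝ) + i + 2) * g⌋ - ⌊((m : ℝ) + i + 1) * g⌋ = 1) →
    GoodW g m (List.replicate k true) := by
  induction k with
  | zero => intro m _; trivial
  | succ k ih =>
    intro m h
    refine ⟨by simpa using h 0 (by omega), ih _ ?_⟩
    intro i hi
    have := h (i + 1) (by omega)
    push_cast at this ⊢
    rw [← this]
    congr 3 <;> ring

lemma GoodW_get (g : ℝ) (w : List Bool) : ∀ m : ℕ, GoodW g m w → ∀ i : ℕ, i < w.length →
    ⌊((m : ℝ) + i + 2) * g⌋ - ⌊((m : ℝ) + i + 1) * g⌋ = if w.getD i false then 1 else 0 := by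
  induction w with
  | nil => intro m _ i hi; simp at hi
  | cons a w ih =>
    intro m h i hi
    cases i with
    | zero => simpa using h.1
    | succ i =>
      have := ih _ h.2 i (by simpa using hi)
      rw [List.getD_cons_succ, ← this]
      push_cast
      congr 3 <;> ring

lemma gammaK_facts (k : ℕ) (hk : 2 ≤ k) :
    gammaK k ^ 2 = k * (1 - gammaK k) ∧ 1 / 2 < gammaK k ∧ gammaK k < 1 := by
  have hk' : (2 : ℝ) ≤ k := by exact_mod_cast hk
  have hs := Real.sq_sqrt (show (0 : ℝ) ≤ (k : ℝ) ^ 2 + 4 * k by positivity)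
  have h1 : (k : ℝ) + 1 < Real.sqrt ((k : ℝ) ^ 2 + 4 * k) := by
    apply Real.lt_sqrt_of_sq_lt; nlinarith
  have h2 : Real.sqrt ((k : ℝ) ^ 2 + 4 * k) < k + 2 := by
    rw [Real.sqrt_lt' (by positivity)]; nlinarith
  unfold gammaK
  refine ⟨by nlinarith, by linarith, by linarith⟩

lemma floor_step (k : ℕ) (g : ℝ) (hg : g ^ 2 = k * (1 - g)) (g1 : 1 / 2 < g) (g2 : g < 1)
    (n h : ℕ) (hh : ⌊((n : ℝ) + 1) * g⌋ = h) :
    (∀ i : ℕ, i ≤ k → ⌊((((k + 1) * n + h : ℕ) : ℝ) + i + 1) * g⌋ = h + n * k + i) ∧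
    ⌊((((k + 1) * n + h : ℕ) : ℝ) + k + 2) * g⌋ = h + n * k + k ∧
    ⌊((((k + 1) * n + h : ℕ) : ℝ) + k + 3) * g⌋ = h + n * k + k + 1 := by
  obtain ⟨f, hf⟩ : ∃ f : ℝ, f = ((n : ℝ) + 1) * g - h := ⟨_, rfl⟩
  have hf' := Int.floor_eq_iff.mp hh
  push_cast at hf'
  have f0 : 0 ≤ f := by linarith [hf'.1]
  have f1 : f < 1 := by linarith [hf'.2]
  have key : ∀ x : ℝ, ((((k + 1) * n + h : ℕ) : ℝ) + x + 1) * g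
      = h + n * k + x + (1 - g) * (f + k - x) := by
    intro x
    push_cast
    rw [hf]
    linear_combination ((n : ℝ) + 1) * hg
  refine ⟨fun i hi => ?_, ?_, ?_⟩
  · rw [key, Int.floor_eq_iff]
    have hi' : (i : ℝ) ≤ k := by exact_mod_cast hi
    have hi0 : (0 : ℝ) ≤ i := by positivity
    push_cast
    constructor
    · nlinarith [mul_nonneg (sub_nonneg.2 g2.le) (show 0 ≤ f + k - i by linarith)]
    · have : (1 - g) * (f + k - i) ≤ (1 - g) * (1 + k) :=
        mul_le_mul_of_nonneg_left (by linarith) (by linarith)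
      nlinarith
  · have := key (k + 1)
    rw [show ((((k + 1) * n + h : ℕ) : ℝ) + k + 2) = (((k + 1) * n + h : ℕ) : ℝ) + (k + 1) + 1 by ring,
      this, Int.floor_eq_iff]
    push_cast
    constructor <;> nlinarith
  · have := key (k + 2)
    rw [show ((((k + 1) * n + h : ℕ) : ℝ) + k + 3) = (((k + 1) * n + h : ℕ) : ℝ) + (k + 2) + 1 by ring,
      this, Int.floor_eq_iff]
    push_cast
    constructor <;> nlinarith

lemma GoodW_theta (k : ℕ) (g : ℝ) (hg : g ^ 2 = k * (1 - g)) (g1 : 1 / 2 < g) (g2 : g < 1)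
    (w : List Bool) : ∀ n h : ℕ, ⌊((n : ℝ) + 1) * g⌋ = h → GoodW g n w →
    GoodW g ((k + 1) * n + h) (w.flatMap (theta k)) := by
  induction w with
  | nil => intros; trivial
  | cons a w ih =>
    intro n h hh hw
    obtain ⟨s1, s2, s3⟩ := floor_step k g hg g1 g2 n h hh
    obtain ⟨ha, hw⟩ := hw
    have hrep : GoodW g ((k + 1) * n + h) (List.replicate k true) := by
      apply GoodW_replicate
      intro i hi
      have e1 := s1 i hi.le
      have e2 := s1 (i + 1) hi
      rw [show ((((k + 1) * n + h : ℕ) : ℝ) + (i + 1 : ℕ) + 1)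
        = (((k + 1) * n + h : ℕ) : ℝ) + i + 2 by push_cast; ring] at e2
      rw [e1, e2]; push_cast; ring
    have z1 := s1 k le_rfl
    have hz : ⌊((((k + 1) * n + h + k : ℕ) : ℝ) + 2) * g⌋ -
        ⌊((((k + 1) * n + h + k : ℕ) : ℝ) + 1) * g⌋ = 0 := by
      rw [Nat.cast_add _ k, s2, z1]; ring
    have hz' : ⌊((((k + 1) * n + h + k + 1 : ℕ) : ℝ) + 2) * g⌋ -
        ⌊((((k + 1) * n + h + k + 1 : ℕ) : ℝ) + 1) * g⌋ = 1 := by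
      rw [Nat.cast_add _ 1, Nat.cast_add _ k, Nat.cast_one,
        show ((((k + 1) * n + h : ℕ) : ℝ) + k + 1 + 2) = (((k + 1) * n + h : ℕ) : ℝ) + k + 3 by ring,
        show ((((k + 1) * n + h : ℕ) : ℝ) + k + 1 + 1) = (((k + 1) * n + h : ℕ) : ℝ) + k + 2 by ring,
        s2, s3]; ring
    rw [List.flatMap_cons]
    have e : (((n + 1 : ℕ) : ℝ) + 1) * g = ((n : ℝ) + 2) * g := by push_cast; ring
    cases a with
    | false =>
      have := ih (n + 1) h (by rw [e]; simp at ha; omega) hw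
      apply GoodW_append
      · apply GoodW_append _ _ _ _ hrep
        simp only [List.length_replicate]
        exact ⟨by simpa using hz, trivial⟩
      · convert this using 1
        simp [theta]; ring
    | true =>
      have := ih (n + 1) (h + 1) (by rw [e]; simp at ha; push_cast; omega) hw
      apply GoodW_append
      · apply GoodW_append _ _ _ _ hrep
        simp only [List.length_replicate]
        exact ⟨by simpa using hz, by simpa using hz', trivial⟩
      · convert this using 1
        simp [theta]; ring

lemma GoodW_vWord (k : ℕ) (hk : 2 ≤ k) (N : ℕ) : GoodW (gammaK k) 0 (vWord k N) := by
  obtain ⟨hg, g1, g2⟩ := gammaK_facts k hk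
  induction N with
  | zero =>
    refine ⟨?_, trivial⟩
    have h1 : ⌊(((0 : ℕ) : ℝ) + 2) * gammaK k⌋ = 1 := by
      rw [Int.floor_eq_iff]; push_cast; constructor <;> linarith
    have h0 : ⌊(((0 : ℕ) : ℝ) + 1) * gammaK k⌋ = 0 := by
      rw [Int.floor_eq_iff]; push_cast; constructor <;> linarith
    rw [h1, h0]; simp
  | succ N ih =>
    have h0 : ⌊(((0 : ℕ) : ℝ) + 1) * gammaK k⌋ = (0 : ℕ) := by
      rw [Int.floor_eq_iff]; push_cast; constructor <;> linarith
    have := GoodW_theta k _ hg g1 g2 _ 0 0 h0 ih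
    unfold vWord at this ⊢
    rw [Function.iterate_succ_apply']
    simpa using this

theorem theta_fixed_point_characteristic (k : ℕ) (hk : 2 ≤ k) (N j : ℕ)
    (hj1 : 1 ≤ j) (hj2 : j ≤ (vWord k N).length) :
    ((vWord k N).getD (j - 1) false = true ↔
      ⌊((j : ℝ) + 1) * gammaK k⌋ - ⌊(j : ℝ) * gammaK k⌋ = 1) ∧
    ((vWord k N).getD (j - 1) false = false ↔
      ⌊((j : ℝ) + 1) * gammaK k⌋ - ⌊(j : ℝ) * gammaK k⌋ = 0) := by
  obtain ⟨i, rfl⟩ : ∃ i, j = i + 1 := ⟨j - 1, by omega⟩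
  have := GoodW_get _ _ 0 (GoodW_vWord k hk N) i (by omega)
  rw [show (((0 : ℕ) : ℝ) + i + 2) = ((i + 1 : ℕ) : ℝ) + 1 by push_cast; ring,
    show (((0 : ℕ) : ℝ) + i + 1) = ((i + 1 : ℕ) : ℝ) by push_cast; ring] at this
  rw [this, Nat.add_sub_cancel]
  cases (vWord k N).getD i false <;> simp
end
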